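/- arXiv:1609.01782 — 4 statements merged into one kernel-verified Lean document; each statement's English description precedes it below -/
import Mathlib

section
/- For every n ≥ 1, the polytope P_n(132,312) equals the set {x ∈ ℝ^n : x_1 + ⋯ + x_n = n(n+1)/2, and |(x_1 + ⋯ + x_j) − j·x_{j+1}| ≤ j(j+1)/2 for every 1 ≤ j ≤ n−1}. In particular, P_n(132,312) is an (n−1)-dimensional rectangular parallelepiped lying in the hyperplane Σ x_i = n(n+1)/2. -/
open Pointwise

/-- `σ` contains the pattern `π`. -/
def containsPattern {n k : ℕ} (σ : Equiv.Perm (Fin n)) (π : Equiv.Perm (Fin k)) : Prop :=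
  ∃ f : Fin k → Fin n, StrictMono f ∧ ∀ a b : Fin k, σ (f a) < σ (f b) ↔ π a < π b

/-- The pattern 132. -/
def p132 : Equiv.Perm (Fin 3) := Equiv.swap 1 2
/-- The pattern 312. -/
def p312 : Equiv.Perm (Fin 3) := (finRotate 3)⁻¹

/-- The point `(σ(1), …, σ(n)) ∈ ℝ^n` (one-based values). -/
def permPoint {n : ℕ} (σ : Equiv.Perm (Fin n)) : Fin n → ℝ := fun i => ((σ i : ℕ) : ℝ) + 1

/-- The polytope `P_n(132,312)`. -/
def P132312 (n : ℕ) : Set (Fin n → ℝ) :=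
  convexHull ℝ (permPoint ''
    {σ : Equiv.Perm (Fin n) | ¬ containsPattern σ p132 ∧ ¬ containsPattern σ p312})

/-- No entry lies strictly between two earlier entries. -/
lemma key_avoid {n : ℕ} (σ : Equiv.Perm (Fin n)) :
    (¬ containsPattern σ p132 ∧ ¬ containsPattern σ p312) ↔
      ∀ i i' c : Fin n, i < c → i' < c → σ i < σ c → σ c < σ i' → False := by
  constructor
  · rintro ⟨h1, h2⟩ i i' c hi hi' ha hb
    rcases lt_trichotomy i i' with h | h | h
    · apply h1
      refine ⟨![i, i', c], ?_, ?_⟩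
      · intro a b hab
        fin_cases a <;> fin_cases b <;> simp_all
      · have e0 : p132 0 = 0 := by decide
        have e1 : p132 1 = 2 := by decide
        have e2 : p132 2 = 1 := by decide
        intro a b
        fin_cases a <;> fin_cases b <;> simp [e0, e1, e2] <;>
          first | exact ha | exact hb | exact ha.trans hb | exact ha.le | exact hb.le | exact (ha.trans hb).le
    · subst h
      exact absurd (ha.trans hb) (lt_irrefl _)
    · apply h2
      refine ⟨![i', i, c], ?_, ?_⟩
      · intro a b hab
        fin_cases a <;> fin_cases b <;> simp_all
      · have e0 : p312 0 = 2 := by decide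
        have e1 : p312 1 = 0 := by decide
        have e2 : p312 2 = 1 := by decide
        intro a b
        fin_cases a <;> fin_cases b <;> simp [e0, e1, e2] <;>
          first | exact ha | exact hb | exact ha.trans hb | exact ha.le | exact hb.le | exact (ha.trans hb).le
  · intro h
    constructor
    · rintro ⟨f, hf, hp⟩
      exact h (f 0) (f 1) (f 2) (hf (by decide)) (hf (by decide))
        ((hp 0 2).2 (by decide)) ((hp 2 1).2 (by decide))
    · rintro ⟨f, hf, hp⟩
      exact h (f 1) (f 0) (f 2) (hf (by decide)) (hf (by decide))
        ((hp 1 2).2 (by decide)) ((hp 2 0).2 (by decide))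

/-- Edge directions of the box. -/
def vv (m : ℕ) (i : Fin m) (k : Fin (m + 1)) : ℝ :=
  if k < i.succ then 1 else if k = i.succ then -((i.succ : ℕ) : ℝ) else 0

/-- Base vertex of the box (the identity permutation). -/
def bb (m : ℕ) (k : Fin (m + 1)) : ℝ := ((k : ℕ) : ℝ) + 1

lemma dot_vv (m : ℕ) (i : Fin m) (w : Fin (m + 1) → ℝ) :
    ∑ k, vv m i k * w k =
      (∑ k ∈ Finset.univ.filter (fun k : Fin (m + 1) => k < i.succ), w k)
        - ((i.succ : ℕ) : ℝ) * w i.succ := by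
  have : ∀ k, vv m i k * w k = (if k < i.succ then w k else 0)
      + (if k = i.succ then -((i.succ : ℕ) : ℝ) * w i.succ else 0) := by
    intro k
    unfold vv
    by_cases h1 : k < i.succ
    · simp [h1, h1.ne]
    · by_cases h2 : k = i.succ
      · subst h2; simp
      · simp [h1, h2]
  rw [Finset.sum_congr rfl (fun k _ => this k), Finset.sum_add_distrib, ← Finset.sum_filter,
    Finset.sum_ite_eq']
  simp; ring

lemma sum_vv (m : ℕ) (i : Fin m) : ∑ k, vv m i k = 0 := by
  have := dot_vv m i (fun _ => 1)
  simp only [mul_one] at this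
  rw [this]
  have h : (Finset.univ.filter (fun k : Fin (m + 1) => k < i.succ)) = Finset.Iio i.succ := by
    ext; simp
  rw [h]; simp

lemma orth_lt (m : ℕ) (i j : Fin m) (h : i < j) : ∑ k, vv m i k * vv m j k = 0 := by
  rw [← sum_vv m i]
  apply Finset.sum_congr rfl
  intro k _
  by_cases hk : k < j.succ
  · simp [vv, hk]
  · have h3 : i.succ < j.succ := Fin.succ_lt_succ_iff.2 h
    have h1 : ¬ k < i.succ := fun h' => hk (h'.trans h3)
    have h2 : k ≠ i.succ := fun h' => hk (h' ▸ h3)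
    simp [vv, h1, h2]

lemma orth (m : ℕ) (i j : Fin m) (h : i ≠ j) : ∑ k, vv m i k * vv m j k = 0 := by
  rcases lt_or_gt_of_ne h with h | h
  · exact orth_lt m i j h
  · rw [← orth_lt m j i h]
    exact Finset.sum_congr rfl (fun k _ => mul_comm _ _)

lemma norm_vv (m : ℕ) (i : Fin m) :
    ∑ k, vv m i k * vv m i k = ((i.succ : ℕ) : ℝ) * ((i.succ : ℕ) + 1) := by
  rw [dot_vv]
  have h : ∑ k ∈ Finset.univ.filter (fun k : Fin (m + 1) => k < i.succ), vv m i k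
      = ∑ k ∈ Finset.univ.filter (fun k : Fin (m + 1) => k < i.succ), (1 : ℝ) := by
    apply Finset.sum_congr rfl
    intro k hk
    simp at hk
    simp [vv, hk]
  have h' : (Finset.univ.filter (fun k : Fin (m + 1) => k < i.succ)) = Finset.Iio i.succ := by
    ext; simp
  rw [h, h']
  simp [vv]; ring

/-- The sum of an initial segment of ℕ transported to `Fin`. -/
lemma sum_Iio_fin (n : ℕ) (j : Fin n) (f : ℕ → ℝ) :
    ∑ k ∈ Finset.univ.filter (fun k : Fin n => k < j), f k = ∑ k ∈ Finset.range j, f k := by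
  apply Finset.sum_nbij (fun k : Fin n => (k : ℕ))
  · intro a ha; simpa using ha
  · intro a _ b _ h; exact Fin.ext h
  · intro a ha
    simp at ha
    exact ⟨⟨a, ha.trans j.2⟩, Finset.mem_coe.2 (Finset.mem_filter.2 ⟨Finset.mem_univ _, ha⟩), rfl⟩
  · intros; rfl

lemma gauss (a : ℝ) (j : ℕ) :
    ∑ k ∈ Finset.range j, (a + (k : ℝ)) = j * a + j * ((j : ℝ) - 1) / 2 := by
  induction j with
  | zero => simp
  | succ j ih => rw [Finset.sum_range_succ, ih]; push_cast; ring

lemma sum_bb (m : ℕ) : ∑ k, bb m k = ((m + 1 : ℕ) : ℝ) * ((m + 1 : ℕ) + 1) / 2 := by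
  have := Fin.sum_univ_eq_sum_range (fun k => (1 : ℝ) + k) (m + 1)
  rw [gauss] at this
  unfold bb
  rw [Finset.sum_congr rfl (fun k _ => add_comm _ _), this]
  push_cast; ring

lemma dot_bb (m : ℕ) (i : Fin m) :
    ∑ k, vv m i k * bb m k = -(((i.succ : ℕ) : ℝ) * ((i.succ : ℕ) + 1) / 2) := by
  rw [dot_vv]
  have := sum_Iio_fin (m + 1) i.succ (fun k => (1 : ℝ) + k)
  rw [gauss] at this
  unfold bb
  rw [Finset.sum_congr rfl (fun k _ => add_comm _ _), this]
  ring

lemma eq_zero_of_dots (m : ℕ) (y : Fin (m + 1) → ℝ) (hs : ∑ k, y k = 0)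
    (hd : ∀ i, ∑ k, vv m i k * y k = 0) : y = 0 := by
  have hc : ∀ N : ℕ, ∀ hN : N < m + 1, y ⟨N, hN⟩ = y 0 := by
    intro N
    induction N using Nat.strong_induction_on with
    | _ N ih =>
      intro hN
      rcases Nat.eq_zero_or_pos N with h0 | h0
      · subst h0; rfl
      · obtain ⟨M, rfl⟩ : ∃ M, N = M + 1 := ⟨N - 1, by omega⟩
        have h := hd ⟨M, by omega⟩
        rw [dot_vv] at h
        have h1 : ∑ k ∈ Finset.univ.filter
            (fun k : Fin (m + 1) => k < (⟨M, by omega⟩ : Fin m).succ), y k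
            = ∑ k ∈ Finset.univ.filter
            (fun k : Fin (m + 1) => k < (⟨M, by omega⟩ : Fin m).succ), y 0 := by
          apply Finset.sum_congr rfl
          intro k hk
          simp [Fin.lt_def] at hk
          exact ih k (Nat.lt_succ_of_le hk) k.2
        have h2 := sum_Iio_fin (m + 1) (⟨M, by omega⟩ : Fin m).succ (fun _ => y 0)
        rw [h1, h2] at h
        simp at h
        have h3 : ((M : ℝ) + 1) * (y 0 - y ⟨M + 1, hN⟩) = 0 := by linarith
        rcases mul_eq_zero.1 h3 with h4 | h4
        · have : (0 : ℝ) < M + 1 := by positivity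
          linarith
        · linarith
  have h0 : y 0 = 0 := by
    rw [Finset.sum_congr rfl (fun (k : Fin (m + 1)) _ => hc (k : ℕ) k.2)] at hs
    simp at hs
    rcases hs with hs | hs
    · have : (0 : ℝ) < m + 1 := by positivity
      linarith
    · exact hs
  funext k
  exact (hc k k.2).trans h0

/-- The set described by inequalities. -/
def BB (n : ℕ) : Set (Fin n → ℝ) := {x : Fin n → ℝ |
      (∑ i, x i) = (n : ℝ) * (n + 1) / 2 ∧
      ∀ j : Fin n, 1 ≤ (j : ℕ) →
        |(∑ i ∈ Finset.univ.filter (fun i : Fin n => i < j), x i) - (j : ℕ) * x j| ≤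
          (j : ℕ) * ((j : ℕ) + 1) / 2}

/-- The box. -/
def AA (m : ℕ) : Set (Fin (m + 1) → ℝ) :=
  {x | ∃ t : Fin m → ℝ, (∀ i, t i ∈ Set.Icc (0 : ℝ) 1) ∧ x = bb m + ∑ i, t i • vv m i}

lemma BB_sub_AA (m : ℕ) : BB (m + 1) ⊆ AA m := by
  rintro x ⟨hs, hx⟩
  have hpos : ∀ i : Fin m, (0 : ℝ) < ((i.succ : ℕ) : ℝ) * ((i.succ : ℕ) + 1) := by
    intro i
    have : (0 : ℝ) < ((i.succ : ℕ) : ℝ) := by simp; positivity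
    positivity
  refine ⟨fun i => (∑ k, vv m i k * x k) / (((i.succ : ℕ) : ℝ) * ((i.succ : ℕ) + 1)) + 1 / 2,
    ?_, ?_⟩
  · intro i
    have h := hx i.succ (by simp)
    rw [← dot_vv] at h
    have hp := hpos i
    rw [abs_le] at h
    have e1 : -(1 / 2 : ℝ) ≤ (∑ k, vv m i k * x k) / (((i.succ : ℕ) : ℝ) * ((i.succ : ℕ) + 1)) := by
      rw [le_div_iff₀ hp]; linarith
    have e2 : (∑ k, vv m i k * x k) / (((i.succ : ℕ) : ℝ) * ((i.succ : ℕ) + 1)) ≤ (1 / 2 : ℝ) := by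
      rw [div_le_iff₀ hp]; linarith
    constructor <;> linarith
  · set t : Fin m → ℝ := fun i =>
      (∑ k, vv m i k * x k) / (((i.succ : ℕ) : ℝ) * ((i.succ : ℕ) + 1)) + 1 / 2 with ht
    rw [← sub_eq_zero]
    apply eq_zero_of_dots
    · simp only [Pi.sub_apply, Pi.add_apply, Finset.sum_apply, Pi.smul_apply, smul_eq_mul,
        Finset.sum_sub_distrib, Finset.sum_add_distrib]
      rw [Finset.sum_comm, hs, sum_bb]
      simp only [← Finset.mul_sum, sum_vv]
      simp
    · intro i
      simp only [Pi.sub_apply, Pi.add_apply, Finset.sum_apply, Pi.smul_apply, smul_eq_mul,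
        mul_sub, mul_add, Finset.sum_sub_distrib, Finset.sum_add_distrib]
      rw [dot_bb]
      have h1 : ∑ k, vv m i k * ∑ j, t j * vv m j k
          = t i * (((i.succ : ℕ) : ℝ) * ((i.succ : ℕ) + 1)) := by
        simp only [Finset.mul_sum]
        rw [Finset.sum_comm, Finset.sum_eq_single i]
        · rw [← norm_vv, Finset.mul_sum]
          exact Finset.sum_congr rfl (fun k _ => by ring)
        · intro j _ hj
          have := orth m i j hj.symm
          rw [← mul_zero (t j), ← this, Finset.mul_sum]
          exact Finset.sum_congr rfl (fun k _ => by ring)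
        · simp
      rw [h1, ht]
      have := (hpos i).ne'
      simp only [add_mul, div_mul_cancel₀ _ this]
      ring

lemma BB_convex (n : ℕ) : Convex ℝ (BB n) := by
  rintro x ⟨hx, hx'⟩ y ⟨hy, hy'⟩ a b ha hb hab
  constructor
  · simp only [Pi.add_apply, Pi.smul_apply, smul_eq_mul, Finset.sum_add_distrib, ← Finset.mul_sum]
    rw [hx, hy, ← add_mul, hab, one_mul]
  · intro j hj
    have h1 := abs_le.1 (hx' j hj)
    have h2 := abs_le.1 (hy' j hj)
    simp only [Pi.add_apply, Pi.smul_apply, smul_eq_mul, Finset.sum_add_distrib, ← Finset.mul_sum]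
    obtain rfl : b = 1 - a := by linarith
    rw [abs_le]
    constructor
    · nlinarith [mul_le_mul_of_nonneg_left h1.1 ha, mul_le_mul_of_nonneg_left h2.1 hb]
    · nlinarith [mul_le_mul_of_nonneg_left h1.2 ha, mul_le_mul_of_nonneg_left h2.2 hb]

lemma interval_of_conn (T : Finset ℕ) (hT : T.Nonempty)
    (h : ∀ a ∈ T, ∀ b ∈ T, ∀ y, a < y → y < b → y ∈ T) :
    ∃ a, T = (Finset.range T.card).image (fun k => a + k) := by
  have e : T = Finset.Icc (T.min' hT) (T.max' hT) := by
    ext y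
    rw [Finset.mem_Icc]
    constructor
    · intro hy; exact ⟨T.min'_le y hy, T.le_max' y hy⟩
    · rintro ⟨h1, h2⟩
      rcases h1.eq_or_lt with h1 | h1
      · rw [← h1]; exact T.min'_mem hT
      · rcases h2.eq_or_lt with h2 | h2
        · rw [h2]; exact T.max'_mem hT
        · exact h _ (T.min'_mem hT) _ (T.max'_mem hT) y h1 h2
  refine ⟨T.min' hT, ?_⟩
  have hc : T.card = T.max' hT + 1 - T.min' hT := by
    conv_lhs => rw [e]
    simp
  rw [hc]
  conv_lhs => rw [e]
  ext y
  simp only [Finset.mem_Icc, Finset.mem_image, Finset.mem_range]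
  constructor
  · rintro ⟨h1, h2⟩; exact ⟨y - T.min' hT, by omega, by omega⟩
  · rintro ⟨k, h1, rfl⟩; omega

lemma perm_mem_BB (n : ℕ) (σ : Equiv.Perm (Fin n))
    (h : ∀ i i' c : Fin n, i < c → i' < c → σ i < σ c → σ c < σ i' → False) :
    permPoint σ ∈ BB n := by
  constructor
  · unfold permPoint
    rw [Equiv.sum_comp σ (fun k => ((k : ℕ) : ℝ) + 1)]
    have := Fin.sum_univ_eq_sum_range (fun k => (1 : ℝ) + k) n
    rw [gauss] at this
    rw [Finset.sum_congr rfl (fun k _ => add_comm _ _), this]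
    ring
  · intro j hj
    set T : Finset ℕ := (Finset.Iic j).image (fun i => (σ i : ℕ)) with hTdef
    have hinj : Set.InjOn (fun i => (σ i : ℕ)) (Finset.Iic j : Finset (Fin n)) :=
      fun a _ b _ hab => σ.injective (Fin.ext hab)
    have hcard : T.card = j + 1 := by
      rw [hTdef, Finset.card_image_of_injOn hinj]; simp
    obtain ⟨a, ha⟩ := interval_of_conn T ⟨σ j, Finset.mem_image.2 ⟨j, by simp, rfl⟩⟩ (by
      intro p hp q hq y hpy hyq
      simp only [hTdef, Finset.mem_image, Finset.mem_Iic] at hp hq ⊢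
      obtain ⟨i, hi, rfl⟩ := hp
      obtain ⟨i', hi', rfl⟩ := hq
      have hy : y < n := hyq.trans (σ i').2
      refine ⟨σ.symm ⟨y, hy⟩, ?_, by simp⟩
      by_contra hc
      push Not at hc
      exact h i i' (σ.symm ⟨y, hy⟩) (hi.trans_lt hc) (hi'.trans_lt hc)
        (by simpa [Fin.lt_def] using hpy) (by simpa [Fin.lt_def] using hyq))
    rw [hcard] at ha
    have hsum : ∑ i ∈ Finset.Iic j, permPoint σ i
        = ((j : ℕ) + 1) * ((a : ℝ) + 1) + ((j : ℕ) + 1) * (j : ℕ) / 2 := by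
      have e1 : ∑ i ∈ Finset.Iic j, permPoint σ i = ∑ y ∈ T, ((y : ℝ) + 1) := by
        rw [hTdef, Finset.sum_image hinj]; rfl
      rw [e1, ha, Finset.sum_image (by intro x _ y _ hxy; simpa using hxy)]
      have := gauss ((a : ℝ) + 1) ((j : ℕ) + 1)
      push_cast at this ⊢
      rw [← sub_eq_zero] at this ⊢
      rw [← this, Finset.sum_congr rfl (fun k _ => add_right_comm _ _ _)]
      ring
    have hsplit : ∑ i ∈ Finset.Iic j, permPoint σ i
        = (∑ i ∈ Finset.univ.filter (fun i : Fin n => i < j), permPoint σ i) + permPoint σ j := by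
      have : Finset.Iic j = insert j (Finset.univ.filter (fun i : Fin n => i < j)) := by
        ext x; simp [le_iff_eq_or_lt]
      rw [this, Finset.sum_insert (by simp)]; ring
    have hjT : (σ j : ℕ) ∈ T := Finset.mem_image.2 ⟨j, by simp, rfl⟩
    rw [ha] at hjT
    simp only [Finset.mem_image, Finset.mem_range] at hjT
    obtain ⟨k, hk, hk'⟩ := hjT
    have hpj : permPoint σ j = a + k + 1 := by
      unfold permPoint; rw [← hk']; push_cast; ring
    have hkj : (k : ℝ) ≤ (j : ℕ) := by exact_mod_cast Nat.lt_succ_iff.1 hk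
    have hk0 : (0 : ℝ) ≤ k := by positivity
    have hj0 : (0 : ℝ) ≤ (j : ℕ) := by positivity
    rw [hsplit, hpj] at hsum
    rw [hpj, abs_le]
    constructor <;> nlinarith

/-- Values of the vertex attached to a subset of edge directions. -/
def gv (m : ℕ) (D : Finset (Fin m)) (k : Fin (m + 1)) : ℕ :=
  (if ∃ i ∈ D, i.succ = k then 0 else (k : ℕ)) + (D.filter (fun i => k < i.succ)).card

lemma gv_lt (m : ℕ) (D : Finset (Fin m)) (k : Fin (m + 1)) : gv m D k < m + 1 := by
  have h : (D.filter (fun i => k < i.succ)).card ≤ (Finset.Ioi k).card := by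
    apply Finset.card_le_card_of_injOn Fin.succ
    · intro i hi
      simp at hi ⊢
      exact hi.2
    · exact (Fin.succ_injective m).injOn
  rw [Fin.card_Ioi] at h
  have := k.2
  unfold gv
  split_ifs <;> omega

lemma gv_pos (m : ℕ) (D : Finset (Fin m)) (k l : Fin (m + 1)) (hkl : k < l)
    (hl : ∃ i ∈ D, i.succ = l) : gv m D l < gv m D k := by
  have h : (D.filter (fun i => l < i.succ)).card < (D.filter (fun i => k < i.succ)).card := by
    obtain ⟨i, hi, rfl⟩ := hl
    apply Finset.card_lt_card
    rw [Finset.ssubset_iff_of_subset]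
    · exact ⟨i, by simp [hi, hkl], by simp⟩
    · intro j hj
      simp only [Finset.mem_filter] at hj ⊢
      exact ⟨hj.1, hkl.trans hj.2⟩
  unfold gv
  rw [if_pos hl]
  omega

lemma gv_neg (m : ℕ) (D : Finset (Fin m)) (k l : Fin (m + 1)) (hkl : k < l)
    (hl : ¬ ∃ i ∈ D, i.succ = l) : gv m D k < gv m D l := by
  have h1 : (D.filter (fun i => k < i.succ ∧ i.succ < l)).card ≤ (Finset.Ioo k l).card := by
    apply Finset.card_le_card_of_injOn Fin.succ
    · intro i hi
      simp at hi ⊢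
      exact hi.2
    · exact (Fin.succ_injective m).injOn
  rw [Fin.card_Ioo] at h1
  have h2 : (D.filter (fun i => k < i.succ)).card ≤
      (D.filter (fun i => l < i.succ)).card
        + (D.filter (fun i => k < i.succ ∧ i.succ < l)).card := by
    refine le_trans (Finset.card_le_card ?_) (Finset.card_union_le _ _)
    intro i hi
    simp only [Finset.mem_filter, Finset.mem_union] at hi ⊢
    rcases lt_trichotomy i.succ l with h | h | h
    · exact Or.inr ⟨hi.1, hi.2, h⟩
    · exact absurd ⟨i, hi.1, h⟩ hl
    · exact Or.inl ⟨hi.1, h⟩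
  have h3 : (k : ℕ) < l := hkl
  unfold gv
  rw [if_neg hl]
  split_ifs <;> omega

lemma vertex (m : ℕ) (D : Finset (Fin m)) :
    bb m + ∑ i, (if i ∈ D then (1 : ℝ) else 0) • vv m i ∈ P132312 (m + 1) := by
  apply subset_convexHull
  let g : Fin (m + 1) → Fin (m + 1) := fun k => ⟨gv m D k, gv_lt m D k⟩
  have hg : Function.Injective g := by
    intro a b hab
    have hab' : gv m D a = gv m D b := congrArg Fin.val hab
    by_contra hne
    rcases lt_or_gt_of_ne hne with h | h
    · by_cases hl : ∃ i ∈ D, i.succ = b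
      · have := gv_pos m D a b h hl; omega
      · have := gv_neg m D a b h hl; omega
    · by_cases hl : ∃ i ∈ D, i.succ = a
      · have := gv_pos m D b a h hl; omega
      · have := gv_neg m D b a h hl; omega
  refine ⟨Equiv.ofBijective g (Finite.injective_iff_bijective.1 hg), ?_, ?_⟩
  · rw [Set.mem_ofPred_eq, key_avoid]
    intro i i' c hi hi' h1 h2
    have h1' : gv m D i < gv m D c := h1
    have h2' : gv m D c < gv m D i' := h2
    by_cases hl : ∃ i ∈ D, i.succ = c
    · have := gv_pos m D i c hi hl; omega
    · have := gv_neg m D i' c hi' hl; omega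
  · funext k
    have e : permPoint (Equiv.ofBijective g (Finite.injective_iff_bijective.1 hg)) k
      = (gv m D k : ℝ) + 1 := rfl
    rw [e]
    simp only [Pi.add_apply, Finset.sum_apply, Pi.smul_apply, smul_eq_mul, ite_mul, one_mul,
      zero_mul, Finset.sum_ite_mem, Finset.univ_inter]
    have hv : ∀ i ∈ D, vv m i k = (if k < i.succ then 1 else 0)
        + (if i.succ = k then -((k : ℕ) : ℝ) else 0) := by
      intro i _
      unfold vv
      by_cases h1 : k < i.succ
      · simp [h1, h1.ne']
      · by_cases h2 : k = i.succ
        · subst h2; simp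
        · simp [h1, h2, Ne.symm h2]
    rw [Finset.sum_congr rfl hv, Finset.sum_add_distrib, Finset.sum_boole]
    unfold gv bb
    by_cases hl : ∃ i ∈ D, i.succ = k
    · rw [if_pos hl]
      obtain ⟨i, hi, rfl⟩ := hl
      rw [Finset.sum_eq_single i]
      · simp; ring
      · intro j _ hj
        rw [if_neg (fun h => hj (Fin.succ_injective m h))]
      · exact fun h => absurd hi h
    · rw [if_neg hl, Finset.sum_eq_zero]
      · push_cast; ring
      · intro i hi
        rw [if_neg (fun h => hl ⟨i, hi, h⟩)]

lemma AA_sub_P (m : ℕ) : AA m ⊆ P132312 (m + 1) := by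
  rintro x ⟨t, ht, rfl⟩
  have hcube : t ∈ convexHull ℝ (Set.univ.pi (fun _ : Fin m => ({0, 1} : Set ℝ))) := by
    rw [convexHull_pi]
    intro i _
    rw [convexHull_pair, segment_eq_Icc zero_le_one]
    exact ht i
  let S : Set (Fin m → ℝ) := {t | bb m + ∑ i, t i • vv m i ∈ P132312 (m + 1)}
  have hS : Convex ℝ S := by
    intro t ht u hu a b ha hb hab
    have := (convex_convexHull ℝ _ : Convex ℝ (P132312 (m + 1))) ht hu ha hb hab
    change bb m + ∑ i, (a • t + b • u) i • vv m i ∈ P132312 (m + 1)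
    have he : bb m + ∑ i, (a • t + b • u) i • vv m i
        = a • (bb m + ∑ i, t i • vv m i) + b • (bb m + ∑ i, u i • vv m i) := by
      have hb' : bb m = a • bb m + b • bb m := by rw [← add_smul, hab, one_smul]
      simp only [Pi.add_apply, Pi.smul_apply, smul_eq_mul, add_smul, mul_smul,
        Finset.sum_add_distrib, ← Finset.smul_sum, smul_add]
      conv_lhs => rw [hb']
      abel
    rw [he]
    exact this
  refine convexHull_min ?_ hS hcube
  intro u hu
  classical
  have := vertex m (Finset.univ.filter (fun i => u i = 1))
  change bb m + ∑ i, u i • vv m i ∈ P132312 (m + 1)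
  have he : ∀ i, (if i ∈ Finset.univ.filter (fun i => u i = 1) then (1 : ℝ) else 0) = u i := by
    intro i
    have := hu i trivial
    simp at this
    rcases this with h | h <;> simp [h]
  simpa only [he] using this

lemma P_sub_BB (n : ℕ) : P132312 n ⊆ BB n := by
  refine convexHull_min ?_ (BB_convex n)
  rintro _ ⟨σ, hσ, rfl⟩
  exact perm_mem_BB n σ ((key_avoid σ).1 hσ)

theorem stmt2 (n : ℕ) (hn : 1 ≤ n) :
    P132312 n = {x : Fin n → ℝ |
      (∑ i, x i) = (n : ℝ) * (n + 1) / 2 ∧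
      ∀ j : Fin n, 1 ≤ (j : ℕ) →
        |(∑ i ∈ Finset.univ.filter (fun i : Fin n => i < j), x i) - (j : ℕ) * x j| ≤
          (j : ℕ) * ((j : ℕ) + 1) / 2} ∧
    ∃ (b : Fin n → ℝ) (v : Fin (n - 1) → Fin n → ℝ),
      (∀ i, v i ≠ 0) ∧
      (∀ i j, i ≠ j → ∑ m, v i m * v j m = 0) ∧
      P132312 n =
        {x | ∃ t : Fin (n - 1) → ℝ, (∀ i, t i ∈ Set.Icc (0 : ℝ) 1) ∧ x = b + ∑ i, t i • v i} := by
  obtain ⟨m, rfl⟩ : ∃ m, n = m + 1 := ⟨n - 1, by omega⟩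
  have h1 := P_sub_BB (m + 1)
  have h2 := BB_sub_AA m
  have h3 := AA_sub_P m
  refine ⟨Set.Subset.antisymm h1 (h2.trans h3), bb m, vv m, ?_, orth m,
    Set.Subset.antisymm (h1.trans h2) h3⟩
  intro i hi
  have := congrFun hi 0
  simp [vv] at this
end

section
/- For all n ≥ 1 and all integers m ≥ 0, the number of lattice points in the m-th dilate of P_n(132,312) is |m·P_n(132,312) ∩ ℤ^n| = Σ_{k=0}^{n−1} (n−1)↓_k · m^k, where (n−1)↓_k = (n−1)(n−2)⋯(n−k) denotes the falling factorial, with (n−1)↓_0 = 1. -/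
open Pointwise

/-- Tail sums attached to a vector `d`: `c(d)_i = ∑_{j>i} d_j + i (M - d_i)`. -/
noncomputable def cubeLin (n : ℕ) : (Fin n → ℝ) →ₗ[ℝ] (Fin n → ℝ) where
  toFun d i := (∑ j, if i < j then d j else 0) - (i : ℕ) * d i
  map_add' x y := by
    funext i
    have : (∑ j, if i < j then (x + y) j else 0)
        = (∑ j, if i < j then x j else 0) + ∑ j, if i < j then y j else 0 := by
      rw [← Finset.sum_add_distrib]
      refine Finset.sum_congr rfl fun j _ => ?_
      split_ifs <;> simp
    rw [this]
    rw [Pi.add_apply, Pi.add_apply]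
    ring
  map_smul' c x := by
    funext i
    have : (∑ j, if i < j then (c • x) j else 0)
        = c * (∑ j, if i < j then x j else 0) := by
      rw [Finset.mul_sum]
      refine Finset.sum_congr rfl fun j _ => ?_
      split_ifs <;> simp
    rw [this]
    rw [Pi.smul_apply, Pi.smul_apply, smul_eq_mul, smul_eq_mul, RingHom.id_apply]
    ring

lemma cubeLin_apply (n : ℕ) (d : Fin n → ℝ) (i : Fin n) :
    cubeLin n d i = (∑ j, if i < j then d j else 0) - (i : ℕ) * d i := rfl

noncomputable def cubeAff (n : ℕ) : (Fin n → ℝ) →ᵃ[ℝ] (Fin n → ℝ) :=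
  (cubeLin n).toAffineMap + AffineMap.const ℝ _ (fun i : Fin n => ((i : ℕ) : ℝ) + 1)

lemma cubeAff_apply (n : ℕ) (d : Fin n → ℝ) (i : Fin n) :
    cubeAff n d i = (∑ j, if i < j then d j else 0) - (i : ℕ) * d i + ((i : ℕ) + 1) := rfl

/-- Avoidance means that no entry lies strictly between two previous entries. -/
lemma avoid_iff {n : ℕ} (σ : Equiv.Perm (Fin n)) :
    (¬ containsPattern σ p132 ∧ ¬ containsPattern σ p312) ↔
      ∀ i j k : Fin n, i < k → j < k → σ i < σ k → σ k < σ j → False := by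
  constructor
  · rintro ⟨h1, h2⟩ i j k hik hjk h3 h4
    rcases lt_trichotomy i j with h | h | h
    · apply h1
      refine ⟨![i, j, k], ?_, ?_⟩
      · intro a b hab
        fin_cases a <;> fin_cases b <;> simp_all
      · intro a b
        have := h3.trans h4
        fin_cases a <;> fin_cases b <;> simp [p132, Equiv.swap_apply_def, h3, h4, this, h3.le, h4.le, this.le]
    · subst h; exact lt_asymm h3 h4
    · apply h2
      refine ⟨![j, i, k], ?_, ?_⟩
      · intro a b hab
        fin_cases a <;> fin_cases b <;> simp_all
      · intro a b
        have := h3.trans h4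
        have e0 : p312 0 = 2 := by decide
        have e1 : p312 1 = 0 := by decide
        have e2 : p312 2 = 1 := by decide
        fin_cases a <;> fin_cases b <;> simp [e0, e1, e2, h3, h4, this, h3.le, h4.le, this.le]
  · intro h
    constructor
    · rintro ⟨f, hf, hp⟩
      exact h (f 0) (f 1) (f 2) (hf (by decide)) (hf (by decide)) ((hp _ _).2 (by decide))
        ((hp _ _).2 (by decide))
    · rintro ⟨f, hf, hp⟩
      exact h (f 1) (f 0) (f 2) (hf (by decide)) (hf (by decide)) ((hp _ _).2 (by decide))
        ((hp _ _).2 (by decide))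

/-- natural number version of the vertex. -/
def vtx {n : ℕ} (e : Fin n → Prop) [DecidablePred e] (i : Fin n) : ℕ :=
  (Finset.univ.filter (fun j => i < j ∧ e j)).card + if e i then 0 else (i : ℕ)

lemma vtx_lo {n : ℕ} (e : Fin n → Prop) [DecidablePred e] {i k : Fin n} (h : i < k) (hk : e k) :
    vtx e k < vtx e i := by
  unfold vtx
  rw [if_pos hk]
  have : (Finset.univ.filter (fun j => k < j ∧ e j)).card <
      (Finset.univ.filter (fun j => i < j ∧ e j)).card := by
    apply Finset.card_lt_card
    rw [Finset.ssubset_iff_of_subset]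
    · exact ⟨k, by simp [h, hk], by simp⟩
    · intro j; simp only [Finset.mem_filter, Finset.mem_univ, true_and]
      exact fun hj => ⟨h.trans hj.1, hj.2⟩
  omega

lemma vtx_hi {n : ℕ} (e : Fin n → Prop) [DecidablePred e] {i k : Fin n} (h : i < k) (hk : ¬ e k) :
    vtx e i < vtx e k := by
  unfold vtx
  rw [if_neg hk]
  have h1 : (Finset.univ.filter (fun j => i < j ∧ e j)) ⊆
      (Finset.univ.filter (fun j => k < j ∧ e j)) ∪ Finset.Ioo i k := by
    intro j
    simp only [Finset.mem_filter, Finset.mem_univ, true_and, Finset.mem_union, Finset.mem_Ioo]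
    rintro ⟨h1, h2⟩
    rcases lt_trichotomy j k with h3 | h3 | h3
    · exact Or.inr ⟨h1, h3⟩
    · subst h3; exact absurd h2 hk
    · exact Or.inl ⟨h3, h2⟩
  have h2 := (Finset.card_le_card h1).trans (Finset.card_union_le _ _)
  rw [Fin.card_Ioo] at h2
  have : (i : ℕ) < k := h
  split_ifs <;> omega

lemma vtx_lt {n : ℕ} (e : Fin n → Prop) [DecidablePred e] (i : Fin n) : vtx e i < n := by
  unfold vtx
  have h1 : (Finset.univ.filter (fun j => i < j ∧ e j)) ⊆ Finset.Ioi i := by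
    intro j; simp only [Finset.mem_filter, Finset.mem_univ, true_and, Finset.mem_Ioi]
    exact fun h => h.1
  have h2 := Finset.card_le_card h1
  rw [Fin.card_Ioi] at h2
  have := i.2
  split_ifs <;> omega

lemma vtx_inj {n : ℕ} (e : Fin n → Prop) [DecidablePred e] : Function.Injective (vtx e) := by
  intro i k h
  rcases lt_trichotomy i k with h1 | h1 | h1
  · by_cases hk : e k
    · have := vtx_lo e h1 hk; omega
    · have := vtx_hi e h1 hk; omega
  · exact h1
  · by_cases hk : e i
    · have := vtx_lo e h1 hk; omega
    · have := vtx_hi e h1 hk; omega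

lemma vtx_real {n : ℕ} (e : Fin n → Prop) [DecidablePred e] (i : Fin n) :
    ((vtx e i : ℕ) : ℝ) + 1 = cubeAff n (fun j => if e j then 1 else 0) i := by
  rw [cubeAff_apply, vtx]
  have : (∑ j, if i < j then (if e j then (1:ℝ) else 0) else 0)
      = (Finset.univ.filter (fun j => i < j ∧ e j)).card := by
    rw [Finset.card_filter]
    push_cast
    refine Finset.sum_congr rfl fun j _ => ?_
    by_cases h1 : i < j <;> by_cases h2 : e j <;> simp [h1, h2]
  rw [this]
  by_cases h : e i <;> simp [h] <;> ring

lemma perm_eq_vtx {n : ℕ} (σ : Equiv.Perm (Fin n))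
    (h : ∀ i j k : Fin n, i < k → j < k → σ i < σ k → σ k < σ j → False)
    (e : Fin n → Prop) [DecidablePred e] (he : ∀ k, e k ↔ ∃ i, i < k ∧ σ k < σ i) (i : Fin n) :
    ((σ i : Fin n) : ℕ) = vtx e i := by
  have h0 : ((σ i : Fin n) : ℕ) = (Finset.univ.filter (fun j => σ j < σ i)).card := by
    have : (Finset.univ.filter (fun j => σ j < σ i)) = (Finset.Iio (σ i)).map σ.symm.toEmbedding := by
      ext j; simp
    rw [this, Finset.card_map, Fin.card_Iio]
  have h1 : (Finset.univ.filter (fun j => σ j < σ i)) =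
      (Finset.univ.filter (fun j => i < j ∧ e j)) ∪ (if e i then ∅ else Finset.Iio i) := by
    ext j
    simp only [Finset.mem_filter, Finset.mem_univ, true_and, Finset.mem_union]
    rcases lt_trichotomy i j with h3 | h3 | h3
    · have : j ∉ (if e i then ∅ else Finset.Iio i : Finset (Fin n)) := by
        split_ifs <;> simp [h3.le]
      simp only [h3, this, true_and, or_false]
      rw [he j]
      constructor
      · exact fun h4 => ⟨i, h3, h4⟩
      · rintro ⟨l, hl, h5⟩
        by_contra h6
        have h7 : σ i < σ j := lt_of_le_of_ne (not_lt.1 h6) (fun h => h3.ne (σ.injective h))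
        exact h i l j h3 hl h7 h5
    · subst h3
      split_ifs <;> simp
    · by_cases hi : e i
      · simp only [hi, if_true, not_lt.2 h3.le, false_and, Finset.notMem_empty, or_false, iff_false]
        intro h4
        obtain ⟨l, hl, h5⟩ := (he i).1 hi
        exact h j l i h3 hl h4 h5
      · simp only [hi, if_false, not_lt.2 h3.le, false_and, Finset.mem_Iio, h3, or_true, iff_true]
        by_contra h6
        have h7 : σ i < σ j := lt_of_le_of_ne (not_lt.1 h6) (fun h => h3.ne' (σ.injective h))
        exact hi ((he i).2 ⟨j, h3, h7⟩)
  rw [h0, h1, Finset.card_union_of_disjoint, vtx]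
  · split_ifs <;> simp
  · rw [Finset.disjoint_left]
    intro j hj
    simp only [Finset.mem_filter, Finset.mem_univ, true_and] at hj
    split_ifs <;> simp [hj.1.le]

lemma vertices_eq (n : ℕ) :
    permPoint '' {σ : Equiv.Perm (Fin n) | ¬ containsPattern σ p132 ∧ ¬ containsPattern σ p312} =
      cubeAff n '' (Set.univ.pi fun _ => ({0, 1} : Set ℝ)) := by
  classical
  ext x
  constructor
  · rintro ⟨σ, hσ, rfl⟩
    have hσ' := (avoid_iff σ).1 hσ
    refine ⟨fun k => if (∃ i, i < k ∧ σ k < σ i) then 1 else 0, ?_, ?_⟩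
    · intro k _
      dsimp only
      split_ifs <;> simp
    · funext i
      rw [← vtx_real (fun k => ∃ i, i < k ∧ σ k < σ i), permPoint,
        perm_eq_vtx σ hσ' (fun k => ∃ i, i < k ∧ σ k < σ i) (fun _ => Iff.rfl)]
  · rintro ⟨d, hd, rfl⟩
    have hd' : d = fun j => if d j = 1 then 1 else 0 := by
      funext j
      have := hd j (Set.mem_univ _)
      simp only [Set.mem_insert_iff, Set.mem_singleton_iff] at this
      rcases this with h | h <;> simp [h]
    let f : Fin n → Fin n := fun i => ⟨vtx (fun j => d j = 1) i, vtx_lt _ i⟩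
    have hf : Function.Injective f := fun i j h => vtx_inj (fun j => d j = 1) (by simpa [f] using h)
    refine ⟨Equiv.ofBijective f (Finite.injective_iff_bijective.1 hf), ?_, ?_⟩
    · rw [Set.mem_ofPred_eq, avoid_iff]
      intro i j k hi hj h1 h2
      simp only [Equiv.ofBijective_apply, f, Fin.mk_lt_mk] at h1 h2
      by_cases hk : d k = 1
      · have := vtx_lo (fun j => d j = 1) hi hk; omega
      · have := vtx_hi (fun j => d j = 1) hj hk; omega
    · funext i
      rw [hd', ← vtx_real]
      simp only [permPoint, Equiv.ofBijective_apply, f]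

lemma P_eq (n : ℕ) : P132312 n = cubeAff n '' (Set.univ.pi fun _ => Set.Icc (0:ℝ) 1) := by
  rw [P132312, vertices_eq, ← AffineMap.image_convexHull, convexHull_pi]
  congr 2
  funext i
  rw [convexHull_pair, segment_eq_Icc zero_le_one]

lemma mem_dilate (n m : ℕ) (x : Fin n → ℝ) : x ∈ (m : ℝ) • P132312 n ↔
    ∃ d : Fin n → ℝ, (∀ i, 0 ≤ d i ∧ d i ≤ m) ∧
      ∀ i, x i = m + (∑ j, if i < j then d j else 0) + (i : ℕ) * (m - d i) := by
  have key : ∀ d : Fin n → ℝ, ∀ i, ((m : ℝ) • cubeAff n d) i =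
      m + (∑ j, if i < j then (m : ℝ) * d j else 0) + (i : ℕ) * (m - m * d i) := by
    intro d i
    have : (∑ j, if i < j then (m : ℝ) * d j else 0) = m * ∑ j, if i < j then d j else 0 := by
      rw [Finset.mul_sum]
      refine Finset.sum_congr rfl fun j _ => ?_
      split_ifs <;> simp
    rw [this, Pi.smul_apply, cubeAff_apply, smul_eq_mul]
    ring
  rw [P_eq]
  constructor
  · rintro ⟨_, ⟨d, hd, rfl⟩, rfl⟩
    refine ⟨fun i => m * d i, fun i => ?_, fun i => key d i⟩
    have := hd i (Set.mem_univ _)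
    exact ⟨mul_nonneg (Nat.cast_nonneg _) this.1, mul_le_of_le_one_right (Nat.cast_nonneg _) this.2⟩
  · rintro ⟨d, hd, hx⟩
    refine ⟨cubeAff n (fun i => d i / m), ⟨_, ?_, rfl⟩, ?_⟩
    · intro i _
      exact ⟨div_nonneg (hd i).1 (Nat.cast_nonneg _), div_le_one_of_le₀ (hd i).2 (Nat.cast_nonneg _)⟩
    · have h : ∀ i, (m : ℝ) * (d i / m) = d i := by
        intro i
        rcases Nat.eq_zero_or_pos m with h | h
        · subst h
          have := hd i
          simp only [Nat.cast_zero] at this ⊢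
          linarith
        · have : (m : ℝ) ≠ 0 := by positivity
          field_simp
      funext i
      dsimp only
      rw [key]
      simp only [h]
      rw [hx]

/-- range of the next partial sum -/
noncomputable def rng (m n : ℕ) (t : ℤ) : Finset ℤ :=
  Finset.Icc (-((-((n + 1) * t)) / (n + 2))) (((n + 1) * t + m * (n + 1) * (n + 2)) / (n + 2))

lemma mem_rng (m n : ℕ) (t s : ℤ) : s ∈ rng m n t ↔
    0 ≤ (n + 2) * s - (n + 1) * t ∧ (n + 2) * s - (n + 1) * t ≤ m * (n + 1) * (n + 2) := by
  have hp : (0 : ℤ) < n + 2 := by positivity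
  rw [rng, Finset.mem_Icc, Int.le_ediv_iff_mul_le hp, neg_le, Int.le_ediv_iff_mul_le hp]
  constructor <;> rintro ⟨h1, h2⟩ <;> constructor <;> linarith

/-- the lattice points with prescribed normalised total sum -/
noncomputable def latt (m : ℕ) : (n : ℕ) → ℤ → Finset (Fin (n + 1) → ℤ)
  | 0, t => {fun _ => m + t}
  | n + 1, t => (rng m n t).biUnion fun s =>
      (latt m n s).image fun x => Fin.snoc (α := fun _ => ℤ) x (m * (n + 2) + t - s)

lemma mem_latt (m n : ℕ) : ∀ (t : ℤ) (x : Fin (n + 1) → ℤ), x ∈ latt m n t ↔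
    ∃ d : Fin (n + 1) → ℝ, (∀ i, 0 ≤ d i ∧ d i ≤ m) ∧
      ∀ i, (x i : ℝ) = m + t / (n + 1) + (∑ j, if i < j then d j else 0) + (i : ℕ) * (m - d i) := by
  induction n with
  | zero =>
    intro t x
    simp only [latt, Finset.mem_singleton]
    constructor
    · rintro rfl
      refine ⟨fun _ => 0, by simp, ?_⟩
      intro i
      fin_cases i
      simp
    · rintro ⟨d, -, h⟩
      funext i
      have := h i
      fin_cases i
      simp at this ⊢
      exact_mod_cast this
  | succ n ih =>
    intro t x
    have hn1 : ((n : ℝ) + 1) ≠ 0 := by positivity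
    have hn2 : ((n : ℝ) + 2) ≠ 0 := by positivity
    have hn3 : ((n : ℝ) + 1 + 1) ≠ 0 := by positivity
    simp only [latt, Finset.mem_biUnion, Finset.mem_image, ih, mem_rng]
    constructor
    · rintro ⟨s, ⟨hs1, hs2⟩, x', ⟨d, hd, hx⟩, rfl⟩
      have hs1' : (0 : ℝ) ≤ (n + 2) * s - (n + 1) * t := by exact_mod_cast hs1
      have hs2' : ((n : ℝ) + 2) * s - (n + 1) * t ≤ m * (n + 1) * (n + 2) := by exact_mod_cast hs2
      have hq : (s : ℝ) / (n + 1) - t / (n + 2) = ((n + 2) * s - (n + 1) * t) / ((n + 1) * (n + 2)) := by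
        field_simp
      refine ⟨Fin.snoc (α := fun _ => ℝ) d (s / (n + 1) - t / (n + 2)), ?_, ?_⟩
      · intro i
        refine Fin.lastCases ?_ (fun i => ?_) i
        · rw [Fin.snoc_last, hq]
          constructor
          · positivity
          · rw [div_le_iff₀ (by positivity)]; linarith
        · rw [Fin.snoc_castSucc]; exact hd i
      · intro i
        refine Fin.lastCases ?_ (fun i => ?_) i
        · rw [Finset.sum_eq_zero (by intro j _; rw [if_neg (not_lt.2 (Fin.le_last j))])]
          simp only [Fin.snoc_last, Fin.val_last]
          push_cast
          field_simp
          ring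
        · rw [Fin.sum_univ_castSucc]
          simp only [Fin.snoc_last, Fin.snoc_castSucc, Fin.castSucc_lt_castSucc_iff,
            Fin.castSucc_lt_last, if_true, Fin.val_castSucc, hx]
          push_cast
          have : (n : ℝ) + 1 + 1 = n + 2 := by ring
          rw [this]
          ring
    · rintro ⟨d, hd, hx⟩
      have hl := hx (Fin.last _)
      rw [Finset.sum_eq_zero (by intro j _; rw [if_neg (not_lt.2 (Fin.le_last j))])] at hl
      simp only [Fin.val_last] at hl
      push_cast at hl
      obtain ⟨s, hs⟩ : ∃ s : ℤ, s = m * (n + 2) + t - x (Fin.last _) := ⟨_, rfl⟩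
      have hsr : (s : ℝ) = m * (n + 2) + t - x (Fin.last _) := by rw [hs]; push_cast; ring
      have hdl : d (Fin.last _) = s / (n + 1) - t / (n + 2) := by
        rw [hsr, hl]
        field_simp
        ring
      have hdm : ((n : ℝ) + 2) * s - (n + 1) * t = d (Fin.last _) * ((n + 1) * (n + 2)) := by
        rw [hdl]; field_simp
      refine ⟨s, ⟨?_, ?_⟩, Fin.init x, ⟨Fin.init d, fun i => hd _, ?_⟩, ?_⟩
      · have : (0 : ℝ) ≤ (n + 2) * s - (n + 1) * t := by
          rw [hdm]; have := (hd (Fin.last _)).1; positivity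
        exact_mod_cast this
      · have : ((n : ℝ) + 2) * s - (n + 1) * t ≤ m * (n + 1) * (n + 2) := by
          rw [hdm, mul_assoc]
          exact mul_le_mul_of_nonneg_right (hd (Fin.last _)).2 (by positivity)
        exact_mod_cast this
      · intro i
        have := hx i.castSucc
        rw [Fin.sum_univ_castSucc] at this
        simp only [Fin.castSucc_lt_castSucc_iff,
            Fin.castSucc_lt_last, if_true, Fin.val_castSucc, hdl] at this
        simp only [Fin.init]
        rw [this]
        push_cast
        have : (n : ℝ) + 1 + 1 = n + 2 := by ring
        rw [this]
        ring
      · have : (m : ℤ) * (n + 2) + t - s = x (Fin.last _) := by rw [hs]; ring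
        rw [this, Fin.snoc_init_self]

def fsum (m n : ℕ) : ℕ := ∑ k ∈ Finset.range (n + 1), Nat.descFactorial n k * m ^ k

lemma fsum_succ (m n : ℕ) : fsum m (n + 1) = 1 + m * (n + 1) * fsum m n := by
  rw [fsum, Finset.sum_range_succ', fsum, Finset.mul_sum]
  simp only [Nat.succ_descFactorial_succ, Nat.descFactorial_zero, pow_zero, mul_one]
  rw [add_comm]
  congr 1
  refine Finset.sum_congr rfl fun k _ => ?_
  ring

lemma latt_card_succ (m n : ℕ) (t : ℤ) :
    (latt m (n + 1) t).card = ∑ s ∈ rng m n t, (latt m n s).card := by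
  rw [latt, Finset.card_biUnion]
  · refine Finset.sum_congr rfl fun s _ => Finset.card_image_of_injective _ ?_
    intro x y h
    have := congrArg (Fin.init (α := fun _ => ℤ)) h
    simpa using this
  · intro s _ s' _ hne
    rw [Function.onFun, Finset.disjoint_left]
    intro x hx hx'
    simp only [Finset.mem_image] at hx hx'
    obtain ⟨y, -, rfl⟩ := hx
    obtain ⟨z, -, h⟩ := hx'
    have := congrFun h (Fin.last _)
    simp only [Fin.snoc_last] at this
    apply hne
    linarith

lemma card_mult (a : ℤ) (ha : 0 < a) (L U u v : ℤ)
    (h : ∀ k : ℤ, (L ≤ a * k ∧ a * k ≤ U) ↔ (u ≤ k ∧ k ≤ v)) :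
    ((Finset.Icc L U).filter (fun s => a ∣ s)).card = (v + 1 - u).toNat := by
  have : (Finset.Icc L U).filter (fun s => a ∣ s) = (Finset.Icc u v).image (fun k => a * k) := by
    ext s
    simp only [Finset.mem_filter, Finset.mem_Icc, Finset.mem_image]
    constructor
    · rintro ⟨h1, k, rfl⟩
      exact ⟨k, (h k).1 h1, rfl⟩
    · rintro ⟨k, hk, rfl⟩
      exact ⟨(h k).2 hk, k, rfl⟩
  rw [this, Finset.card_image_of_injective, Int.card_Icc]
  intro x y hxy
  exact mul_left_cancel₀ ha.ne' hxy

lemma rng_card_dvd (m n : ℕ) (t : ℤ) (h : ((n : ℤ) + 2) ∣ t) :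
    (rng m n t).card = m * (n + 1) + 1 ∧
    ((rng m n t).filter (fun s => ((n : ℤ) + 1) ∣ s)).card = m + 1 := by
  obtain ⟨q, rfl⟩ := h
  have hp : (0 : ℤ) < n + 2 := by positivity
  have hp1 : (0 : ℤ) < n + 1 := by positivity
  have e : rng m n ((n + 2) * q) = Finset.Icc ((n + 1) * q) ((n + 1) * (q + m)) := by
    ext s
    rw [mem_rng, Finset.mem_Icc]
    constructor
    · rintro ⟨h1, h2⟩
      constructor
      · refine le_of_mul_le_mul_left ?_ hp; linarith
      · refine le_of_mul_le_mul_left ?_ hp; linarith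
    · rintro ⟨h1, h2⟩
      have h1 := mul_le_mul_of_nonneg_left h1 hp.le
      have h2 := mul_le_mul_of_nonneg_left h2 hp.le
      constructor <;> linarith
  rw [e]
  constructor
  · rw [Int.card_Icc]
    have : ((n : ℤ) + 1) * (q + m) + 1 - (n + 1) * q = ((m * (n + 1) + 1 : ℕ) : ℤ) := by
      push_cast; ring
    rw [this, Int.toNat_natCast]
  · rw [card_mult (n + 1) hp1 _ _ q (q + m)]
    · omega
    · intro k
      rw [mul_le_mul_iff_right₀ hp1, mul_le_mul_iff_right₀ hp1]

lemma rng_card_ndvd (m n : ℕ) (t : ℤ) (h : ¬ ((n : ℤ) + 2) ∣ t) :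
    (rng m n t).card = m * (n + 1) ∧
    ((rng m n t).filter (fun s => ((n : ℤ) + 1) ∣ s)).card = m := by
  have hp : (0 : ℤ) < n + 2 := by positivity
  have hp1 : (0 : ℤ) < n + 1 := by positivity
  obtain ⟨q, r, rfl, hr0, hr1⟩ : ∃ q r : ℤ, t = (n + 2) * q + r ∧ 0 < r ∧ r < n + 2 := by
    refine ⟨t / (n + 2), t % (n + 2), (Int.mul_ediv_add_emod _ _).symm, ?_, Int.emod_lt_of_pos _ hp⟩
    exact lt_of_le_of_ne (Int.emod_nonneg _ hp.ne') (fun h' => h (Int.dvd_of_emod_eq_zero h'.symm))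
  have e : rng m n ((n + 2) * q + r) =
      Finset.Icc ((n + 1) * q + r) ((n + 1) * (q + m) + r - 1) := by
    ext s
    rw [mem_rng, Finset.mem_Icc]
    constructor
    · rintro ⟨h1, h2⟩
      constructor
      · refine Int.le_of_lt_add_one (lt_of_mul_lt_mul_left ?_ hp.le); linarith
      · refine Int.le_of_lt_add_one (lt_of_mul_lt_mul_left ?_ hp.le); linarith
    · rintro ⟨h1, h2⟩
      have h1 := mul_le_mul_of_nonneg_left h1 hp.le
      have h2 := mul_le_mul_of_nonneg_left h2 hp.le
      constructor <;> linarith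
  rw [e]
  constructor
  · rw [Int.card_Icc]
    have : ((n : ℤ) + 1) * (q + m) + r - 1 + 1 - ((n + 1) * q + r) = ((m * (n + 1) : ℕ) : ℤ) := by
      push_cast; ring
    rw [this, Int.toNat_natCast]
  · rw [card_mult (n + 1) hp1 _ _ (q + 1) (q + m)]
    · omega
    · intro k
      constructor
      · rintro ⟨h1, h2⟩
        constructor
        · refine Int.le_of_sub_one_lt (lt_of_mul_lt_mul_left ?_ hp1.le); linarith
        · refine Int.le_of_lt_add_one (lt_of_mul_lt_mul_left ?_ hp1.le); linarith
      · rintro ⟨h1, h2⟩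
        have h1 := mul_le_mul_of_nonneg_left h1 hp1.le
        have h2 := mul_le_mul_of_nonneg_left h2 hp1.le
        constructor <;> linarith

lemma latt_card (m n : ℕ) : ∀ t : ℤ,
    ((((n : ℤ) + 1) ∣ t) → (latt m n t).card = fsum m n) ∧
    ((¬ ((n : ℤ) + 1) ∣ t) → ((latt m n t).card : ℤ) = fsum m n - fsum m (n - 1)) := by
  induction n with
  | zero =>
    intro t
    constructor
    · intro _; simp [latt, fsum]
    · intro h; simp at h
  | succ n ih =>
    intro t
    have hs : ((latt m (n + 1) t).card : ℤ) =
        ((rng m n t).filter (fun s => ((n : ℤ) + 1) ∣ s)).card * fsum m n +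
        ((rng m n t).card - ((rng m n t).filter (fun s => ((n : ℤ) + 1) ∣ s)).card) *
          (fsum m n - fsum m (n - 1)) := by
      rw [latt_card_succ, ← Finset.sum_filter_add_sum_filter_not _ (fun s => ((n : ℤ) + 1) ∣ s)]
      rw [Nat.cast_add, Nat.cast_sum, Nat.cast_sum,
        Finset.sum_congr rfl (g := fun _ => (fsum m n : ℤ)),
        Finset.sum_congr (s₁ := Finset.filter (fun s => ¬ ((n : ℤ) + 1) ∣ s) (rng m n t)) rfl
          (g := fun _ => (fsum m n : ℤ) - fsum m (n - 1))]
      · rw [Finset.sum_const, Finset.sum_const, nsmul_eq_mul, nsmul_eq_mul]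
        congr 2
        have := Finset.card_filter_add_card_filter_not (s := rng m n t) (fun s => ((n : ℤ) + 1) ∣ s)
        rw [← this]; push_cast; ring
      · intro s hs
        exact (ih s).2 (Finset.mem_filter.1 hs).2
      · intro s hs
        rw [(ih s).1 (Finset.mem_filter.1 hs).2]
    have hF : (fsum m (n + 1) : ℤ) = 1 + m * (n + 1) * fsum m n := by
      rw [fsum_succ]; push_cast; ring
    have hG : (m : ℤ) * n * (fsum m n - fsum m (n - 1)) = m * n * fsum m n - (fsum m n - 1) := by
      cases n with
      | zero => simp [fsum]
      | succ k =>
        have : (fsum m (k + 1) : ℤ) = 1 + m * (k + 1) * fsum m k := by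
          rw [fsum_succ]; push_cast; ring
        simp only [Nat.add_sub_cancel]
        push_cast
        linear_combination this
    have hc : ((n + 1 : ℕ) : ℤ) + 1 = n + 2 := by push_cast; ring
    rw [hc]
    constructor
    · intro h
      obtain ⟨h1, h2⟩ := rng_card_dvd m n t h
      rw [h1, h2] at hs
      push_cast at hs
      have : ((latt m (n + 1) t).card : ℤ) = fsum m (n + 1) := by
        rw [hs, hF]; linear_combination hG
      exact_mod_cast this
    · intro h
      obtain ⟨h1, h2⟩ := rng_card_ndvd m n t h
      rw [h1, h2] at hs
      push_cast at hs
      rw [hs, hF]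
      simp only [Nat.add_sub_cancel]
      linear_combination hG

theorem stmt3 (n : ℕ) (hn : 1 ≤ n) (m : ℕ) :
    Set.ncard {x : Fin n → ℤ | (fun i => (x i : ℝ)) ∈ (m : ℝ) • P132312 n} =
      ∑ k ∈ Finset.range n, Nat.descFactorial (n - 1) k * m ^ k := by
  obtain ⟨n, rfl⟩ : ∃ k, n = k + 1 := ⟨n - 1, by omega⟩
  have : {x : Fin (n + 1) → ℤ | (fun i => (x i : ℝ)) ∈ (m : ℝ) • P132312 (n + 1)} =
      (latt m n 0 : Set (Fin (n + 1) → ℤ)) := by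
    ext x
    rw [Set.mem_ofPred_eq, mem_dilate, Finset.mem_coe, mem_latt]
    simp
  rw [this, Set.ncard_coe_finset, (latt_card m n 0).1 (dvd_zero _)]
  rfl
end

section
/- For all n ≥ 2 and all integers m ≥ 0, (n−1)! · |m·P_n(123,132) ∩ ℤ^n| = (m+1) · ∏_{j=2}^{n−1} (n·m + j); i.e., the number of lattice points in the m-th dilate of P_n(123,132) equals (m+1)·∏_{j=2}^{n−1}(nm+j)/(n−1)!. -/
open Pointwise

/-- The pattern 123. -/
def p123 : Equiv.Perm (Fin 3) := 1
/-- The polytope `P_n(123,132)`. -/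
def P123132 (n : ℕ) : Set (Fin n → ℝ) :=
  convexHull ℝ (permPoint ''
    {σ : Equiv.Perm (Fin n) | ¬ containsPattern σ p123 ∧ ¬ containsPattern σ p132})

/-! ### Counting -/

/-- Prepend a value to a sequence. -/
def seqCons (v : ℕ) (y : ℕ → ℕ) : ℕ → ℕ
  | 0 => v
  | j + 1 => y j

open Classical in
/-- The finite set of sequences with bounded partial sums. -/
noncomputable def seqF (m : ℕ) : ℕ → ℕ → Finset (ℕ → ℕ)
  | 0, _ => {fun _ => 0}
  | k + 1, a => (Finset.range (a + 1)).biUnion fun w => (seqF m k (m + w)).image (seqCons (a - w))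

theorem mem_seqF (m k a : ℕ) (y : ℕ → ℕ) :
    y ∈ seqF m k a ↔ (∀ j, k ≤ j → y j = 0) ∧
      ∀ i, i < k → ∑ j ∈ Finset.range (i + 1), y j ≤ a + i * m := by
  induction k generalizing a y with
  | zero =>
    simp only [seqF, Finset.mem_singleton]
    constructor
    · rintro rfl; simp
    · rintro ⟨h, -⟩; funext j; exact h j (Nat.zero_le _)
  | succ k ih =>
    simp only [seqF, Finset.mem_biUnion, Finset.mem_image, Finset.mem_range]
    constructor
    · rintro ⟨w, hw, z, hz, rfl⟩
      rw [ih] at hz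
      refine ⟨?_, ?_⟩
      · intro j hj
        cases j with
        | zero => omega
        | succ j => exact hz.1 j (by omega)
      · intro i hi
        rw [Finset.sum_range_succ']
        simp only [seqCons]
        cases i with
        | zero => simp
        | succ i =>
          have := hz.2 i (by omega)
          rw [Nat.succ_mul]
          omega
    · rintro ⟨h1, h2⟩
      have h0 := h2 0 (by omega)
      simp at h0
      refine ⟨a - y 0, by omega, fun j => y (j + 1), ?_, ?_⟩
      · rw [ih]
        refine ⟨fun j hj => h1 _ (by omega), fun i hi => ?_⟩
        have := h2 (i + 1) (by omega)
        rw [Finset.sum_range_succ', Nat.succ_mul] at this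
        omega
      · funext j
        cases j with
        | zero => simp only [seqCons]; omega
        | succ j => rfl

theorem card_seqF_succ (m k a : ℕ) :
    (seqF m (k + 1) a).card = ∑ w ∈ Finset.range (a + 1), (seqF m k (m + w)).card := by
  classical
  rw [seqF, Finset.card_biUnion]
  · refine Finset.sum_congr rfl fun w _ => ?_
    convert Finset.card_image_of_injective (seqF m k (m + w)) (f := seqCons (a - w)) ?_
    intro y z h
    funext j
    exact congrFun h (j + 1)
  · intro w hw w' hw' hne
    change Disjoint _ _
    rw [Finset.disjoint_left]
    intro y hy hy'
    simp only [Finset.mem_image, Finset.mem_coe, Finset.mem_range] at hy hy' hw hw'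
    obtain ⟨z, -, rfl⟩ := hy
    obtain ⟨z', -, h⟩ := hy'
    have := congrFun h 0
    simp only [seqCons] at this
    omega

theorem card_seqF (m k a : ℕ) :
    (k + 1).factorial * (seqF m (k + 1) a).card =
      (a + 1) * ∏ j ∈ Finset.range k, (a + (k + 1) * m + j + 2) := by
  induction k generalizing a with
  | zero => rw [card_seqF_succ]; simp [seqF]
  | succ k ih =>
    induction a with
    | zero =>
      rw [card_seqF_succ, Finset.sum_range_one, Nat.factorial_succ, mul_assoc, ih,
        Finset.prod_range_succ]
      have : ∏ j ∈ Finset.range k, (m + 0 + (k + 1) * m + j + 2) =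
          ∏ j ∈ Finset.range k, (0 + (k + 1 + 1) * m + j + 2) :=
        Finset.prod_congr rfl fun j _ => by ring
      rw [this]
      ring
    | succ a iha =>
      rw [card_seqF_succ, Finset.sum_range_succ, ← card_seqF_succ, mul_add, iha,
        Nat.factorial_succ, mul_assoc, ih, Finset.prod_range_succ', Finset.prod_range_succ]
      have e1 : ∏ j ∈ Finset.range k, (m + (a + 1) + (k + 1) * m + j + 2) =
          ∏ j ∈ Finset.range k, (a + 1 + (k + 1 + 1) * m + j + 2) :=
        Finset.prod_congr rfl fun j _ => by ring
      have e2 : ∏ j ∈ Finset.range k, (a + (k + 1 + 1) * m + (j + 1) + 2) =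
          ∏ j ∈ Finset.range k, (a + 1 + (k + 1 + 1) * m + j + 2) :=
        Finset.prod_congr rfl fun j _ => by ring
      rw [e1, e2]
      ring

/-! ### The polytope -/

/-- Shifted coordinates. -/
noncomputable def shiftY {n : ℕ} (m : ℝ) (x : Fin n → ℝ) (j : ℕ) : ℝ :=
  if h : j < n then x ⟨j, h⟩ - m * ((n : ℝ) - 1 - j) else 0

/-- The inequality description. -/
def polyQ (n : ℕ) (m : ℝ) : Set (Fin n → ℝ) :=
  {x | (∀ j, 0 ≤ shiftY m x j) ∧
    (∀ i, i ≤ n → ∑ j ∈ Finset.range i, shiftY m x j ≤ m * i) ∧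
    ∑ j ∈ Finset.range n, shiftY m x j = m * n}

theorem convex_polyQ (n : ℕ) (m : ℝ) : Convex ℝ (polyQ n m) := by
  rintro x ⟨hx1, hx2, hx3⟩ y ⟨hy1, hy2, hy3⟩ a b ha hb hab
  have key : ∀ j, shiftY m (a • x + b • y) j = a * shiftY m x j + b * shiftY m y j := by
    intro j
    unfold shiftY
    split_ifs
    · simp only [Pi.add_apply, Pi.smul_apply, smul_eq_mul]
      linear_combination (m * ((n : ℝ) - 1 - j)) * hab
    · ring
  have keyS : ∀ i, ∑ j ∈ Finset.range i, shiftY m (a • x + b • y) j =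
      a * ∑ j ∈ Finset.range i, shiftY m x j + b * ∑ j ∈ Finset.range i, shiftY m y j := by
    intro i
    simp only [key, Finset.sum_add_distrib, Finset.mul_sum]
  refine ⟨fun j => ?_, fun i hi => ?_, ?_⟩
  · rw [key]
    have := mul_nonneg ha (hx1 j)
    have := mul_nonneg hb (hy1 j)
    linarith
  · rw [keyS]
    have h1 := mul_le_mul_of_nonneg_left (hx2 i hi) ha
    have h2 := mul_le_mul_of_nonneg_left (hy2 i hi) hb
    have : a * (m * i) + b * (m * i) = m * i := by rw [← add_mul, hab, one_mul]
    linarith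
  · rw [keyS, hx3, hy3, ← add_mul, hab, one_mul]

/-- Avoidance means at most one larger entry to the right. -/
theorem avoid_of {n : ℕ} {σ : Equiv.Perm (Fin n)}
    (h : ∀ i j k : Fin n, i < j → j < k → σ i < σ j → σ i < σ k → False) :
    ¬ containsPattern σ p123 ∧ ¬ containsPattern σ p132 := by
  constructor
  · rintro ⟨f, hf, hp⟩
    exact h (f 0) (f 1) (f 2) (hf (by decide)) (hf (by decide))
      ((hp 0 1).2 (by decide)) ((hp 0 2).2 (by decide))
  · rintro ⟨f, hf, hp⟩
    exact h (f 0) (f 1) (f 2) (hf (by decide)) (hf (by decide))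
      ((hp 0 1).2 (by decide)) ((hp 0 2).2 (by decide))

theorem of_avoid {n : ℕ} {σ : Equiv.Perm (Fin n)}
    (h1 : ¬ containsPattern σ p123) (h2 : ¬ containsPattern σ p132)
    (i j k : Fin n) (hij : i < j) (hjk : j < k) (h3 : σ i < σ j) (h4 : σ i < σ k) : False := by
  have hmono : StrictMono ![i, j, k] := by
    rw [Fin.strictMono_iff_lt_succ]
    intro a
    fin_cases a
    · exact hij
    · exact hjk
  rcases lt_trichotomy (σ j) (σ k) with h | h | h
  · refine h1 ⟨![i, j, k], hmono, ?_⟩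
    intro a b
    fin_cases a <;> fin_cases b <;> simp [p123, h, h3, h4, h.le, h3.le, h4.le]
  · exact hjk.ne (σ.injective h)
  · refine h2 ⟨![i, j, k], hmono, ?_⟩
    have e0 : p132 0 = 0 := by decide
    have e1 : p132 1 = 2 := by decide
    have e2 : p132 2 = 1 := by decide
    intro a b
    fin_cases a <;> fin_cases b <;> simp [e0, e1, e2, h, h3, h4, h.le, h3.le, h4.le]

theorem avoid_lower {n : ℕ} {σ : Equiv.Perm (Fin n)}
    (h1 : ¬ containsPattern σ p123) (h2 : ¬ containsPattern σ p132) (i : Fin n) :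
    n ≤ (σ i : ℕ) + i + 2 := by
  classical
  -- positions of larger values
  have hc : ((Finset.Ioi (σ i)).map σ.symm.toEmbedding).card = n - 1 - (σ i : ℕ) := by
    rw [Finset.card_map, Fin.card_Ioi]
  have hsub : (Finset.Ioi (σ i)).map σ.symm.toEmbedding ⊆
      Finset.Iio i ∪ (Finset.Ioi i).filter (fun j => σ i < σ j) := by
    intro j hj
    simp only [Finset.mem_map, Finset.mem_Ioi, Equiv.coe_toEmbedding] at hj
    obtain ⟨v, hv, rfl⟩ := hj
    simp only [Finset.mem_union, Finset.mem_Iio, Finset.mem_filter, Finset.mem_Ioi,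
      Equiv.apply_symm_apply]
    rcases lt_trichotomy (σ.symm v) i with h | h | h
    · exact Or.inl h
    · subst h; simp at hv
    · exact Or.inr ⟨h, hv⟩
  have h3 : ((Finset.Ioi i).filter (fun j => σ i < σ j)).card ≤ 1 := by
    rw [Finset.card_le_one]
    intro a ha b hb
    simp only [Finset.mem_filter, Finset.mem_Ioi] at ha hb
    rcases lt_trichotomy a b with h | h | h
    · exact (of_avoid h1 h2 i a b ha.1 h ha.2 hb.2).elim
    · exact h
    · exact (of_avoid h1 h2 i b a hb.1 h hb.2 ha.2).elim
  have h4 := (Finset.card_le_card hsub).trans (Finset.card_union_le _ _)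
  rw [hc, Fin.card_Iio] at h4
  have := (σ i).isLt
  omega

theorem sum_distinct_le (n : ℕ) (v : ℕ → ℕ) (i : ℕ)
    (hv : ∀ j, j < i → v j < n) (hinj : Set.InjOn v (Finset.range i)) :
    ∑ j ∈ Finset.range i, ((v j : ℝ) + 1 - (1 * ((n : ℝ) - 1 - j))) ≤ 1 * i := by
  classical
  have hinj' : Set.InjOn (fun j => (v j : ℤ)) (Finset.range i) := by
    intro a ha b hb h
    exact hinj ha hb (Nat.cast_injective (R := ℤ) h)
  have h := Finset.sum_le_sum_range (s := (Finset.range i).image (fun j => (v j : ℤ)))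
    (c := (n : ℤ) - 1) (by
      intro x hx
      simp only [Finset.mem_image, Finset.mem_range] at hx
      obtain ⟨j, hj, rfl⟩ := hx
      have := hv j hj
      omega)
  rw [Finset.card_image_of_injOn hinj', Finset.sum_image hinj', Finset.card_range] at h
  have h' : ∑ j ∈ Finset.range i, (v j : ℝ) ≤ ∑ j ∈ Finset.range i, ((n : ℝ) - 1 - j) := by
    exact_mod_cast h
  simp only [Finset.sum_sub_distrib, Finset.sum_add_distrib, one_mul] at h' ⊢
  simp at h' ⊢
  linarith

theorem permPoint_mem_polyQ {n : ℕ} {σ : Equiv.Perm (Fin n)}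
    (h1 : ¬ containsPattern σ p123) (h2 : ¬ containsPattern σ p132) :
    permPoint σ ∈ polyQ n 1 := by
  have hY : ∀ j (h : j < n), shiftY 1 (permPoint σ) j =
      ((σ ⟨j, h⟩ : ℕ) : ℝ) + 1 - 1 * ((n : ℝ) - 1 - j) := by
    intro j h
    simp [shiftY, h, permPoint]
  refine ⟨?_, ?_, ?_⟩
  · intro j
    by_cases h : j < n
    · rw [hY j h]
      have := avoid_lower h1 h2 ⟨j, h⟩
      have : (n : ℝ) ≤ ((σ ⟨j, h⟩ : ℕ) : ℝ) + j + 2 := by exact_mod_cast this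
      linarith
    · simp [shiftY, h]
  · intro i hi
    have := sum_distinct_le n (fun j => if h : j < n then (σ ⟨j, h⟩ : ℕ) else 0) i (by
      intro j hj
      have hjn : j < n := by omega
      simp [hjn]) (by
      intro a ha b hb hab
      simp only [Finset.coe_range, Set.mem_Iio] at ha hb
      have ha' : a < n := by omega
      have hb' : b < n := by omega
      simp only [ha', hb', dite_true] at hab
      have := σ.injective (Fin.ext hab)
      simpa using this)
    refine le_trans (le_of_eq (Finset.sum_congr rfl fun j hj => ?_)) this
    rw [Finset.mem_range] at hj
    have hjn : j < n := by omega
    rw [hY j hjn]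
    simp [hjn]
  · rw [Finset.sum_range]
    have : ∀ j : Fin n, shiftY 1 (permPoint σ) j = ((σ j : ℕ) : ℝ) + 1 - 1 * ((n : ℝ) - 1 - (j : ℕ)) :=
      fun j => hY j j.isLt
    simp only [this]
    have e1 : ∑ j : Fin n, ((σ j : ℕ) : ℝ) = ∑ j : Fin n, ((j : ℕ) : ℝ) :=
      Equiv.sum_comp σ (fun j : Fin n => ((j : ℕ) : ℝ))
    have e2 : ∑ j : Fin n, ((j : ℕ) : ℝ) = ∑ j : Fin n, ((n : ℝ) - 1 - ((j : ℕ) : ℝ)) := by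
      rw [← Equiv.sum_comp Fin.revPerm]
      refine Finset.sum_congr rfl fun j _ => ?_
      have := j.isLt
      rw [Fin.revPerm_apply, Fin.val_rev, Nat.cast_sub (by omega)]
      push_cast
      ring
    rw [Finset.sum_sub_distrib, Finset.sum_add_distrib, e1]
    simp only [one_mul]
    rw [← e2]
    simp

/-- The last block end. -/
noncomputable def lastEnd (b : ℕ → Prop) [DecidablePred b] : ℕ → ℕ
  | 0 => 0
  | i + 1 => if b i then i + 1 else lastEnd b i

section
variable (b : ℕ → Prop) [DecidablePred b]

theorem lastEnd_le (i : ℕ) : lastEnd b i ≤ i := by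
  induction i with
  | zero => simp [lastEnd]
  | succ i ih => simp only [lastEnd]; split_ifs <;> omega

theorem lastEnd_ge {i j : ℕ} (hb : b i) (hij : i < j) : i + 1 ≤ lastEnd b j := by
  induction j with
  | zero => omega
  | succ j ih =>
    simp only [lastEnd]
    split_ifs with h
    · omega
    · exact ih (by rcases Nat.lt_succ_iff_lt_or_eq.1 hij with h' | h'
                   · exact h'
                   · subst h'; exact absurd hb h)

theorem lastEnd_spec {i j : ℕ} (h : lastEnd b j = i + 1) : b i := by
  induction j with
  | zero => simp [lastEnd] at h
  | succ j ih =>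
    simp only [lastEnd] at h
    split_ifs at h with h'
    · have : j = i := by omega
      exact this ▸ h'
    · exact ih h

theorem exists_perm (n : ℕ) (hlast : b (n - 1)) : ∃ σ : Equiv.Perm (Fin n),
    (¬ containsPattern σ p123 ∧ ¬ containsPattern σ p132) ∧
    ∀ i : Fin n, (σ i : ℕ) + i + 2 + lastEnd b i = n + lastEnd b (i + 1) := by
  have hbn : ∀ i : Fin n, ¬ b i → (i : ℕ) + 2 ≤ n := by
    intro i hi
    by_contra h
    have : (i : ℕ) = n - 1 := by have := i.isLt; omega
    exact hi (this ▸ hlast)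
  let v : Fin n → Fin n := fun i =>
    ⟨if b i then n - 1 - lastEnd b i else n - 2 - i, by have := i.isLt; split_ifs <;> omega⟩
  have hv : ∀ i, ((v i : ℕ)) = if b i then n - 1 - lastEnd b i else n - 2 - i := fun i => rfl
  have hlt : ∀ i j : Fin n, i < j → v i ≠ v j := by
    intro i j hij h
    have hij' : (i : ℕ) < j := hij
    have h' : (v i : ℕ) = v j := congrArg _ h
    rw [hv, hv] at h'
    have := lastEnd_le b i
    have := lastEnd_le b j
    have := j.isLt
    by_cases hi : b i
    · have := lastEnd_ge b hi hij'
      by_cases hj : b j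
      · simp only [hi, hj, if_true] at h'; omega
      · have := hbn j hj
        simp only [hi, hj, if_true, if_false] at h'; omega
    · have := hbn i hi
      by_cases hj : b j
      · simp only [hi, hj, if_true, if_false] at h'
        exact hi (lastEnd_spec b (j := j) (by omega))
      · have := hbn j hj
        simp only [hi, hj, if_false] at h'; omega
  have hinj : Function.Injective v := by
    intro i j h
    rcases lt_trichotomy i j with h' | h' | h'
    · exact (hlt _ _ h' h).elim
    · exact h'
    · exact (hlt _ _ h' h.symm).elim
  refine ⟨Equiv.ofBijective v (Finite.injective_iff_bijective.1 hinj), avoid_of ?_, ?_⟩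
  · intro i j k hij hjk h1 h2
    simp only [Equiv.ofBijective_apply] at h1 h2
    have h1' : (v i : ℕ) < v j := h1
    have h2' : (v i : ℕ) < v k := h2
    have hij' : (i : ℕ) < j := hij
    have hjk' : (j : ℕ) < k := hjk
    rw [hv, hv] at h1' h2'
    have := lastEnd_le b i
    have := lastEnd_le b j
    have := lastEnd_le b k
    have := k.isLt
    by_cases hi : b i
    · have := lastEnd_ge b hi hij'
      by_cases hj : b j
      · simp only [hi, hj, if_true] at h1'; omega
      · have := hbn j hj
        simp only [hi, hj, if_true, if_false] at h1'; omega
    · have := hbn i hi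
      by_cases hj : b j
      · have := lastEnd_ge b hj hjk'
        by_cases hk : b k
        · simp only [hi, hk, if_true, if_false] at h2'; omega
        · simp only [hi, hk, if_false] at h2'; omega
      · simp only [hi, hj, if_false] at h1'; omega
  · intro i
    simp only [Equiv.ofBijective_apply, hv, lastEnd]
    have := lastEnd_le b i
    have := i.isLt
    by_cases hi : b i
    · simp only [hi, if_true]; omega
    · have := hbn i hi
      simp only [hi, if_false]; omega

end

/-- The multi-affine parametrization. -/
noncomputable def parS (t : ℕ → ℝ) : ℕ → ℝ
  | 0 => 0
  | i + 1 => (1 - t i) * parS t i + t i * (i + 1)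

theorem parS_congr (t t' : ℕ → ℝ) (i : ℕ) (h : ∀ j, j < i → t j = t' j) :
    parS t i = parS t' i := by
  induction i with
  | zero => rfl
  | succ i ih =>
    simp only [parS]
    rw [ih fun j hj => h j (by omega), h i (by omega)]

theorem parS_update (t : ℕ → ℝ) (a : ℕ) (r : ℝ) (i : ℕ) :
    parS (Function.update t a r) i =
      (1 - r) * parS (Function.update t a 0) i + r * parS (Function.update t a 1) i := by
  induction i with
  | zero => simp [parS]
  | succ i ih =>
    simp only [parS]
    by_cases h : i = a
    · subst h
      have e : ∀ r, parS (Function.update t i r) i = parS t i := fun r =>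
        parS_congr _ _ _ fun j hj => by rw [Function.update_of_ne (by omega)]
      simp only [e, Function.update_self]
      ring
    · simp only [Function.update_of_ne h]
      rw [ih]
      ring

/-- The point with given partial sums. -/
noncomputable def parX (n : ℕ) (t : ℕ → ℝ) : Fin n → ℝ :=
  fun i => (n : ℝ) - 1 - (i : ℕ) + (parS t (i + 1) - parS t i)

theorem parX_update (n : ℕ) (t : ℕ → ℝ) (a : ℕ) (r : ℝ) :
    parX n (Function.update t a r) =
      (1 - r) • parX n (Function.update t a 0) + r • parX n (Function.update t a 1) := by
  funext i
  simp only [parX, Pi.add_apply, Pi.smul_apply, smul_eq_mul]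
  rw [parS_update t a r i, parS_update t a r (i + 1)]
  ring

theorem parX_mem (n : ℕ) (A : Finset ℕ) (t : ℕ → ℝ)
    (hA : ∀ j ∈ A, 0 ≤ t j ∧ t j ≤ 1) (hAc : ∀ j, j ∉ A → t j = 0 ∨ t j = 1)
    (hn : n - 1 ∉ A) (hlast : t (n - 1) = 1) : parX n t ∈ P123132 n := by
  classical
  induction A using Finset.induction_on generalizing t with
  | empty =>
    have h01 : ∀ j, t j = 0 ∨ t j = 1 := fun j => hAc j (by simp)
    obtain ⟨σ, hσ, h⟩ := exists_perm (fun j => t j = 1) n hlast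
    have hS : ∀ i, parS t i = (lastEnd (fun j => t j = 1) i : ℕ) := by
      intro i
      induction i with
      | zero => simp [parS, lastEnd]
      | succ i ih =>
        simp only [parS, lastEnd]
        rcases h01 i with h0 | h0
        · simp [h0, ih]
        · simp [h0]
    refine subset_convexHull ℝ _ ⟨σ, hσ, ?_⟩
    funext i
    have := h i
    have h' : ((σ i : ℕ) : ℝ) + (i : ℕ) + 2 + (lastEnd (fun j => t j = 1) i : ℕ) =
      n + (lastEnd (fun j => t j = 1) (i + 1) : ℕ) := by exact_mod_cast this
    simp only [permPoint, parX, hS]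
    linarith
  | insert a A ha ih =>
    have hna : n - 1 ≠ a := by
      rintro rfl
      simp at hn
    have hnA : n - 1 ∉ A := fun h => hn (Finset.mem_insert_of_mem h)
    have hup : ∀ r : ℝ, (r = 0 ∨ r = 1) → parX n (Function.update t a r) ∈ P123132 n := by
      intro r hr
      apply ih
      · intro j hj
        have : j ≠ a := by rintro rfl; exact ha hj
        rw [Function.update_of_ne this]
        exact hA j (Finset.mem_insert_of_mem hj)
      · intro j hj
        by_cases h : j = a
        · subst h; simpa using hr
        · rw [Function.update_of_ne h]
          exact hAc j (by simp [h, hj])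
      · exact hnA
      · rw [Function.update_of_ne hna]; exact hlast
    have hta := hA a (Finset.mem_insert_self _ _)
    have e := parX_update n t a (t a)
    rw [Function.update_eq_self] at e
    rw [e]
    exact convex_convexHull ℝ _ (hup 0 (Or.inl rfl)) (hup 1 (Or.inr rfl))
      (by linarith [hta.2]) hta.1 (by ring)

theorem polyQ_one (n : ℕ) (hn : 1 ≤ n) : P123132 n = polyQ n 1 := by
  classical
  apply Set.Subset.antisymm
  · refine convexHull_min ?_ (convex_polyQ n 1)
    rintro _ ⟨σ, ⟨h1, h2⟩, rfl⟩
    exact permPoint_mem_polyQ h1 h2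
  · rintro x ⟨h1, h2, h3⟩
    let s : ℕ → ℝ := fun i => ∑ j ∈ Finset.range i, shiftY 1 x j
    have hs : ∀ i, s (i + 1) = s i + shiftY 1 x i := fun i => Finset.sum_range_succ _ _
    have hsle : ∀ i, i ≤ n → s i ≤ i := fun i hi => by simpa using h2 i hi
    let t : ℕ → ℝ := fun i => if i < n then (s (i + 1) - s i) / ((i : ℝ) + 1 - s i) else 0
    have hpos : ∀ i, i < n → 0 < (i : ℝ) + 1 - s i := fun i hi => by
      linarith [hsle i hi.le]
    have hS : ∀ i, i ≤ n → parS t i = s i := by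
      intro i
      induction i with
      | zero => intro _; simp [parS, s]
      | succ i ih =>
        intro hi
        have hi' : i < n := by omega
        have hp := (hpos i hi').ne'
        simp only [parS, ih hi'.le, t, hi', if_true]
        field_simp
        ring
    have hx : x = parX n t := by
      funext i
      have : shiftY 1 x i = x i - 1 * ((n : ℝ) - 1 - (i : ℕ)) := by simp [shiftY]
      simp only [parX]
      rw [hS i i.isLt.le, hS (i + 1) i.isLt, hs, this]
      ring
    have hlast : t (n - 1) = 1 := by
      have hj' : n - 1 < n := by omega
      simp only [t, hj', if_true]
      rw [div_eq_one_iff_eq (hpos _ hj').ne']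
      have e : n - 1 + 1 = n := by omega
      have e' : ((n - 1 : ℕ) : ℝ) + 1 = n := by exact_mod_cast congrArg (Nat.cast (R := ℝ)) e
      have e3 : s n = n := by simpa using h3
      rw [e, e', e3]
    rw [hx]
    refine parX_mem n (Finset.range (n - 1)) t ?_ ?_ (by simp) ?_
    · intro j hj
      rw [Finset.mem_range] at hj
      have hj' : j < n := by omega
      have hp := hpos j hj'
      have h5 := hsle (j + 1) hj'
      push_cast at h5
      simp only [t, hj', if_true]
      refine ⟨div_nonneg (by rw [hs]; linarith [h1 j]) hp.le, ?_⟩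
      rw [div_le_one hp]
      linarith
    · intro j hj
      rw [Finset.mem_range] at hj
      rcases Nat.lt_or_ge j n with h | h
      · have : j = n - 1 := by omega
        rw [this]
        exact Or.inr hlast
      · left
        simp [t, not_lt.2 h]
    · exact hlast

theorem mem_smul_iff (n : ℕ) (hn : 1 ≤ n) (m : ℕ) (x : Fin n → ℝ) :
    x ∈ (m : ℝ) • P123132 n ↔ x ∈ polyQ n m := by
  rw [polyQ_one n hn]
  have key : ∀ (y : Fin n → ℝ) j, shiftY (m : ℝ) ((m : ℝ) • y) j = m * shiftY 1 y j := by
    intro y j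
    unfold shiftY
    split_ifs
    · simp only [Pi.smul_apply, smul_eq_mul]; ring
    · simp
  constructor
  · rintro ⟨y, ⟨h1, h2, h3⟩, rfl⟩
    have hm : (0 : ℝ) ≤ m := Nat.cast_nonneg m
    refine ⟨?_, ?_, ?_⟩
    · intro j
      simp only [key]
      exact mul_nonneg hm (h1 j)
    · intro i hi
      simp only [key, ← Finset.mul_sum]
      exact mul_le_mul_of_nonneg_left (by simpa using h2 i hi) hm
    · simp only [key, ← Finset.mul_sum]
      rw [h3, one_mul]
  · rintro ⟨h1, h2, h3⟩
    rcases Nat.eq_zero_or_pos m with hm | hm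
    · subst hm
      have hne : (polyQ n 1).Nonempty := by
        rw [← polyQ_one n hn]
        obtain ⟨σ, hσ, -⟩ := exists_perm (fun _ => True) n trivial
        exact ⟨_, subset_convexHull ℝ _ ⟨σ, hσ, rfl⟩⟩
      have hx : x = 0 := by
        funext i
        simp only [Nat.cast_zero, zero_mul] at h3
        rw [Finset.sum_eq_zero_iff_of_nonneg (fun j _ => by simpa using h1 j)] at h3
        have := h3 i (by simp)
        simpa [shiftY] using this
      rw [hx, Nat.cast_zero, Set.zero_smul_set hne]
      rfl
    · have hm' : (0 : ℝ) < m := by exact_mod_cast hm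
      have hx : x = (m : ℝ) • ((m : ℝ)⁻¹ • x) := by
        rw [smul_smul, mul_inv_cancel₀ hm'.ne', one_smul]
      rw [hx] at h1 h2 h3
      simp only [key, ← Finset.mul_sum] at h1 h2 h3
      refine ⟨(m : ℝ)⁻¹ • x, ⟨?_, ?_, ?_⟩, hx.symm⟩
      · intro j
        exact nonneg_of_mul_nonneg_right (h1 j) hm'
      · intro i hi
        have := le_of_mul_le_mul_left (h2 i hi) hm'
        simpa using this
      · have := mul_left_cancel₀ hm'.ne' h3
        simpa using this

/-- Lattice point from a sequence. -/
def toPt (k m : ℕ) (y : ℕ → ℕ) : Fin (k + 1) → ℤ := fun i =>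
  if (i : ℕ) < k then (y i : ℤ) + m * ((k : ℤ) - (i : ℕ))
  else m * (k + 1) - ∑ j ∈ Finset.range k, (y j : ℤ)

theorem toPt_injOn (k m : ℕ) : Set.InjOn (toPt k m) (seqF m k m) := by
  intro y hy z hz h
  rw [Finset.mem_coe, mem_seqF] at hy hz
  funext j
  by_cases hj : j < k
  · have := congrFun h ⟨j, by omega⟩
    simp only [toPt, hj, if_true] at this
    omega
  · rw [hy.1 j (by omega), hz.1 j (by omega)]

theorem set_eq (k m : ℕ) (hk : 1 ≤ k) :
    {x : Fin (k + 1) → ℤ | (fun i => (x i : ℝ)) ∈ (m : ℝ) • P123132 (k + 1)} =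
      toPt k m '' (seqF m k m) := by
  ext x
  rw [Set.mem_setOf_eq, mem_smul_iff _ (by omega)]
  -- integer version
  let Y : ℕ → ℤ := fun j => if h : j < k + 1 then x ⟨j, h⟩ - m * ((k : ℤ) - j) else 0
  have hY : ∀ j, shiftY (m : ℝ) (fun i => (x i : ℝ)) j = (Y j : ℝ) := by
    intro j
    simp only [shiftY, Y]
    split_ifs
    · push_cast; ring
    · simp
  have hQ : (fun i => (x i : ℝ)) ∈ polyQ (k + 1) (m : ℝ) ↔
      (∀ j, 0 ≤ Y j) ∧ (∀ i, i ≤ k + 1 → ∑ j ∈ Finset.range i, Y j ≤ m * i) ∧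
      ∑ j ∈ Finset.range (k + 1), Y j = m * (k + 1) := by
    simp only [polyQ, Set.mem_setOf_eq, hY]
    norm_cast
  rw [hQ]
  have hYx : ∀ i : Fin (k + 1), x i = Y i + m * ((k : ℤ) - (i : ℕ)) := by
    intro i
    simp only [Y, dif_pos i.isLt]
    ring
  constructor
  · rintro ⟨h1, h2, h3⟩
    refine ⟨fun j => if j < k then (Y j).toNat else 0, ?_, ?_⟩
    · rw [Finset.mem_coe, mem_seqF]
      refine ⟨fun j hj => by simp [not_lt.2 hj], fun i hi => ?_⟩
      have := h2 (i + 1) (by omega)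
      have e : ((∑ j ∈ Finset.range (i + 1), (if j < k then (Y j).toNat else 0) : ℕ) : ℤ) =
          ∑ j ∈ Finset.range (i + 1), Y j := by
        rw [Nat.cast_sum]
        refine Finset.sum_congr rfl fun j hj => ?_
        rw [Finset.mem_range] at hj
        rw [if_pos (by omega), Int.toNat_of_nonneg (h1 j)]
      rw [← Int.ofNat_le]
      change ((∑ j ∈ Finset.range (i + 1), (if j < k then (Y j).toNat else 0) : ℕ) : ℤ) ≤ _
      rw [e]
      push_cast at this ⊢
      linarith
    · funext i
      simp only [toPt]
      split_ifs with h
      · rw [Int.toNat_of_nonneg (h1 _), hYx]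
      · have hi : (i : ℕ) = k := by have := i.isLt; omega
        rw [hYx, hi]
        rw [Finset.sum_range_succ] at h3
        have e : ∑ j ∈ Finset.range k, (((if j < k then (Y j).toNat else 0 : ℕ)) : ℤ) =
            ∑ j ∈ Finset.range k, Y j := by
          refine Finset.sum_congr rfl fun j hj => ?_
          rw [Finset.mem_range] at hj
          rw [if_pos hj, Int.toNat_of_nonneg (h1 j)]
        rw [e]
        linarith
  · rintro ⟨y, hy, rfl⟩
    rw [Finset.mem_coe, mem_seqF] at hy
    have e1 : ∀ j, j < k → Y j = y j := by
      intro j hj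
      have hj' : j < k + 1 := by omega
      simp only [Y, dif_pos hj', toPt, hj, if_true]
      ring
    have e2 : Y k = m * (k + 1) - ∑ j ∈ Finset.range k, (y j : ℤ) := by
      simp [Y, toPt]
    have e3 : ∀ j, k < j → Y j = 0 := by
      intro j hj
      have : ¬ j < k + 1 := by omega
      simp only [Y, dif_neg this]
    have es : ∀ i, i ≤ k → ∑ j ∈ Finset.range i, Y j = ∑ j ∈ Finset.range i, (y j : ℤ) := by
      intro i hi
      refine Finset.sum_congr rfl fun j hj => ?_
      rw [Finset.mem_range] at hj
      exact e1 j (by omega)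
    have hle : ∀ i, i ≤ k → ∑ j ∈ Finset.range i, (y j : ℤ) ≤ m * i := by
      intro i hi
      cases i with
      | zero => simp
      | succ i =>
        have := hy.2 i (by omega)
        zify at this
        push_cast
        linarith
    have htot : ∑ j ∈ Finset.range (k + 1), Y j = m * (k + 1) := by
      rw [Finset.sum_range_succ, es k le_rfl, e2]
      ring
    refine ⟨?_, ?_, htot⟩
    · intro j
      rcases lt_trichotomy j k with h | h | h
      · rw [e1 j h]; positivity
      · rw [h, e2]
        have := hle k le_rfl
        have : (0 : ℤ) ≤ m := by positivity
        linarith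
      · rw [e3 j h]
    · intro i hi
      rcases Nat.lt_succ_iff_lt_or_eq.1 (Nat.lt_succ_of_le hi) with h | h
      · rw [es i (by omega)]; exact hle i (by omega)
      · rw [h, htot]; push_cast; exact le_rfl

theorem stmt5 (n : ℕ) (hn : 2 ≤ n) (m : ℕ) :
    Nat.factorial (n - 1) *
        Set.ncard {x : Fin n → ℤ | (fun i => (x i : ℝ)) ∈ (m : ℝ) • P123132 n} =
      (m + 1) * ∏ j ∈ Finset.Icc 2 (n - 1), (n * m + j) := by
  obtain ⟨k, rfl⟩ : ∃ k, n = k + 2 := ⟨n - 2, by omega⟩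
  have h := set_eq (k + 1) m (by omega)
  rw [h, Set.ncard_image_of_injOn (toPt_injOn _ _), Set.ncard_coe_finset]
  have e : k + 2 - 1 = k + 1 := by omega
  rw [e, card_seqF, ← Finset.Ico_add_one_right_eq_Icc,
    Finset.prod_Ico_eq_prod_range]
  have e' : k + 1 + 1 - 2 = k := by omega
  rw [e']
  congr 1
  refine Finset.prod_congr rfl fun j _ => ?_
  ring
end

section
/- For all n ≥ 1: the set Av_n(123,231,312) has exactly n elements, the corresponding n points (σ(1),…,σ(n)) ∈ ℝ^n are affinely independent (so P_n(123,231,312) is an (n−1)-dimensional simplex), and lim_{m→∞} |m·P_n(123,231,312) ∩ ℤ^n| / m^{n−1} = n^{n−2}/(n−1)! (equivalently, the normalized volume of P_n(123,231,312) is n^{n−2}). -/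
open Pointwise

/-- The pattern 231. -/
def p231 : Equiv.Perm (Fin 3) := finRotate 3
/-- `Av_n(123,231,312)`. -/
def Av123231312 (n : ℕ) : Set (Equiv.Perm (Fin n)) :=
  {σ : Equiv.Perm (Fin n) |
    ¬ containsPattern σ p123 ∧ ¬ containsPattern σ p231 ∧ ¬ containsPattern σ p312}

/-- The polytope `P_n(123,231,312)`. -/
def P123231312 (n : ℕ) : Set (Fin n → ℝ) :=
  convexHull ℝ (permPoint '' Av123231312 n)

theorem mem_Av_iff {n : ℕ} (σ : Equiv.Perm (Fin n)) : σ ∈ Av123231312 n ↔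
    ∀ i j k : Fin n, i < j → j < k →
      ¬ (σ i < σ j ∧ σ j < σ k) ∧ ¬ (σ k < σ i ∧ σ i < σ j) ∧ ¬ (σ j < σ k ∧ σ k < σ i) := by
  have key : ∀ π : Equiv.Perm (Fin 3), containsPattern σ π ↔ ∃ i j k : Fin n, i < j ∧ j < k ∧
      (σ i < σ j ↔ π 0 < π 1) ∧ (σ i < σ k ↔ π 0 < π 2) ∧ (σ j < σ k ↔ π 1 < π 2) ∧
      (σ j < σ i ↔ π 1 < π 0) ∧ (σ k < σ i ↔ π 2 < π 0) ∧ (σ k < σ j ↔ π 2 < π 1) := by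
    intro π
    constructor
    · rintro ⟨f, hf, h⟩
      exact ⟨f 0, f 1, f 2, hf (by decide), hf (by decide), h _ _, h _ _, h _ _, h _ _, h _ _, h _ _⟩
    · rintro ⟨i, j, k, hij, hjk, h1, h2, h3, h4, h5, h6⟩
      refine ⟨![i, j, k], ?_, ?_⟩
      · intro a b hab
        have := hij.trans hjk
        fin_cases a <;> fin_cases b <;> simp_all
      · intro a b
        fin_cases a <;> fin_cases b <;> simp_all
  have e1 : p123 0 = 0 ∧ p123 1 = 1 ∧ p123 2 = 2 := by decide
  have e2 : p231 0 = 1 ∧ p231 1 = 2 ∧ p231 2 = 0 := by decide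
  have e3 : p312 0 = 2 ∧ p312 1 = 0 ∧ p312 2 = 1 := by decide
  unfold Av123231312
  rw [Set.mem_ofPred_eq, key, key, key, e1.1, e1.2.1, e1.2.2, e2.1, e2.2.1, e2.2.2,
    e3.1, e3.2.1, e3.2.2]
  simp only [Fin.lt_def]
  constructor
  · rintro ⟨h1, h2, h3⟩ i j k hij hjk
    refine ⟨fun h => h1 ⟨i, j, k, hij, hjk, ?_⟩, fun h => h2 ⟨i, j, k, hij, hjk, ?_⟩,
      fun h => h3 ⟨i, j, k, hij, hjk, ?_⟩⟩ <;> simp <;> omega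
  · intro h
    refine ⟨?_, ?_, ?_⟩ <;> rintro ⟨i, j, k, hij, hjk, h'⟩ <;> have := h i j k hij hjk <;>
      simp at h' <;> omega

theorem val_one_aux {k : ℕ} (hk : 0 < k) : ((1 : Fin (k + 1)) : ℕ) = 1 := by
  obtain ⟨j, rfl⟩ : ∃ j, k = j + 1 := ⟨k - 1, by omega⟩
  rfl

theorem sub_val {k : ℕ} (c i : Fin (k + 1)) :
    ((c - i : Fin (k + 1)) : ℕ) = if (i : ℕ) ≤ c then (c : ℕ) - i else c + (k + 1) - i := by
  split_ifs with h
  · exact Fin.coe_sub_iff_le.2 h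
  · rw [Fin.coe_sub_iff_lt.2 (by rw [Fin.lt_def]; omega)]
    omega

/-- The permutation `i ↦ c - i`. -/
def sg {k : ℕ} (c : Fin (k + 1)) : Equiv.Perm (Fin (k + 1)) := Equiv.subLeft c

theorem sg_apply {k : ℕ} (c i : Fin (k + 1)) : sg c i = c - i := rfl

theorem sg_inj {k : ℕ} : Function.Injective (sg (k := k)) := by
  intro c d h
  have := congrArg (fun σ => σ 0) h
  simpa [sg_apply] using this

theorem Av_eq (k : ℕ) : Av123231312 (k + 1) = Set.range (sg (k := k)) := by
  ext σ
  rw [mem_Av_iff]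
  constructor
  · intro h
    have step : ∀ (i : ℕ) (hi : i + 1 < k + 1),
        σ ⟨i + 1, hi⟩ = σ ⟨i, by omega⟩ - 1 := by
      intro i hi
      by_contra hne
      obtain ⟨j, hj⟩ := σ.surjective (σ ⟨i, by omega⟩ - 1)
      have hval : (σ j : ℕ) = if 1 ≤ (σ ⟨i, by omega⟩ : ℕ) then (σ ⟨i, by omega⟩ : ℕ) - 1
          else (σ ⟨i, by omega⟩ : ℕ) + (k + 1) - 1 := by
        have : ((1 : Fin (k + 1)) : ℕ) = 1 := val_one_aux (by omega)
        rw [hj, sub_val, this]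
      have hj1 : j ≠ ⟨i + 1, hi⟩ := by
        rintro rfl
        exact hne hj
      have hw : (σ ⟨i + 1, hi⟩ : ℕ) ≠ σ j := fun hh => hj1 (σ.injective (Fin.ext hh)).symm
      have hv : (σ ⟨i + 1, hi⟩ : ℕ) ≠ σ ⟨i, by omega⟩ := fun hh => by
        have := σ.injective (Fin.ext hh)
        simp at this
      have hj0 : (j : ℕ) ≠ i := by
        intro hh
        have : j = ⟨i, by omega⟩ := Fin.ext hh
        rw [this] at hval
        have := (σ ⟨i, by omega⟩).isLt
        split_ifs at hval <;> omega
      have hj1' : (j : ℕ) ≠ i + 1 := fun hh => hj1 (Fin.ext hh)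
      have b1 := (σ ⟨i, by omega⟩).isLt
      have b2 := (σ ⟨i + 1, hi⟩).isLt
      rcases lt_or_gt_of_ne hj0 with hlt | hgt
      · have := h j ⟨i, by omega⟩ ⟨i + 1, hi⟩ hlt (by simp [Fin.lt_def])
        simp only [Fin.lt_def] at this
        split_ifs at hval <;> omega
      · have := h ⟨i, by omega⟩ ⟨i + 1, hi⟩ j (by simp [Fin.lt_def])
          (by simp only [Fin.lt_def]; omega)
        simp only [Fin.lt_def] at this
        split_ifs at hval <;> omega
    refine ⟨σ 0, ?_⟩
    have all : ∀ (i : ℕ) (hi : i < k + 1), σ ⟨i, hi⟩ = σ 0 - ⟨i, hi⟩ := by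
      intro i
      induction i with
      | zero => intro hi; simp
      | succ i ih =>
        intro hi
        rw [step i hi, ih (by omega), sub_sub]
        congr 1
        ext
        rw [Fin.val_add, val_one_aux (by omega),
          Nat.mod_eq_of_lt (by simpa using hi)]
    ext i
    rw [sg_apply, ← all i i.isLt]
  · rintro ⟨c, rfl⟩ i j l hij hjl
    simp only [sg_apply, Fin.lt_def, sub_val] at *
    have := c.isLt
    have := i.isLt
    have := j.isLt
    have := l.isLt
    split_ifs <;> omega

theorem point_sg {k : ℕ} (c i : Fin (k + 1)) :
    permPoint (sg c) i = (((c - i : Fin (k + 1)) : ℕ) : ℝ) + 1 := rfl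

theorem diff_val {k : ℕ} (c i : Fin (k + 1)) :
    (((c - i : Fin (k + 1)) : ℕ) : ℝ) - ((c - (i + 1) : Fin (k + 1)) : ℕ) =
      1 - if c = i then (k + 1 : ℝ) else 0 := by
  rw [← sub_sub]
  generalize hd : c - i = d
  have hci : c = i ↔ d = 0 := by rw [← hd, sub_eq_zero]
  simp only [hci]
  rcases Nat.eq_zero_or_pos k with rfl | hk
  · have : d = 0 := Fin.ext (by omega)
    subst this
    simp
  have h1 : ((1 : Fin (k + 1)) : ℕ) = 1 := val_one_aux hk
  have hd0 : d = 0 ↔ (d : ℕ) = 0 := Fin.ext_iff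
  have hv := sub_val d 1
  rw [h1] at hv
  rw [hv]
  by_cases h : (d : ℕ) = 0
  · simp [hd0, h]
  · have : 1 ≤ (d : ℕ) := by omega
    simp [hd0, h, this]

/-- The key linear identity. -/
theorem key_lin {k : ℕ} (l : Fin (k + 1) → ℝ) (i : Fin (k + 1)) :
    ∑ c, l c * permPoint (sg c) i - ∑ c, l c * permPoint (sg c) (i + 1) =
      ∑ c, l c - (k + 1) * l i := by
  rw [← Finset.sum_sub_distrib]
  have : ∀ c, l c * permPoint (sg c) i - l c * permPoint (sg c) (i + 1) =
      l c - if c = i then (k + 1 : ℝ) * l c else 0 := by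
    intro c
    have := diff_val c i
    rw [point_sg, point_sg, ← mul_sub, add_sub_add_right_eq_sub, this]
    split_ifs <;> ring
  rw [Finset.sum_congr rfl fun c _ => this c, Finset.sum_sub_distrib]
  simp

theorem lin_inj {k : ℕ} (l l' : Fin (k + 1) → ℝ) (hs : ∑ c, l c = ∑ c, l' c)
    (h : ∀ i, ∑ c, l c * permPoint (sg c) i = ∑ c, l' c * permPoint (sg c) i) : l = l' := by
  ext i
  have h1 := key_lin l i
  have h2 := key_lin l' i
  rw [h, h, h2, hs] at h1
  have : (k + 1 : ℝ) * l i = (k + 1) * l' i := by linarith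
  exact mul_left_cancel₀ (by positivity) this

theorem aff_indep (k : ℕ) :
    AffineIndependent ℝ (fun c : Fin (k + 1) => permPoint (sg c)) := by
  rw [affineIndependent_iff_of_fintype]
  intro w hw h
  have h2 : ∑ c, w c • permPoint (sg c) = 0 := by
    rwa [Finset.weightedVSub_eq_linear_combination _ hw] at h
  have := lin_inj w 0 (by simpa using hw) (fun i => by
    have := congrFun h2 i
    simpa [Finset.sum_apply] using this)
  intro i
  rw [this]; rfl

theorem mem_dilate_s9 {k m : ℕ} (hm : 0 < m) (x : Fin (k + 1) → ℝ) :
    x ∈ (m : ℝ) • P123231312 (k + 1) ↔ ∃ l : Fin (k + 1) → ℝ, (∀ c, 0 ≤ l c) ∧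
      ∑ c, l c = m ∧ ∀ i, x i = ∑ c, l c * permPoint (sg c) i := by
  have hm0 : (m : ℝ) ≠ 0 := by positivity
  unfold P123231312
  rw [Av_eq, ← Set.range_comp, Set.mem_smul_set]
  constructor
  · rintro ⟨y, hy, rfl⟩
    have hy' : y ∈ convexHull ℝ ((Finset.univ.image (permPoint ∘ sg (k := k)) : Finset _) : Set _) := by
      rw [Finset.coe_image, Finset.coe_univ, Set.image_univ]
      exact hy
    rw [Finset.mem_convexHull'] at hy'
    obtain ⟨w, h0, h1, h2⟩ := hy'
    have hinj : Set.InjOn (permPoint ∘ sg (k := k)) (Finset.univ : Finset (Fin (k + 1))) :=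
      ((aff_indep k).injective).injOn
    rw [Finset.sum_image hinj] at h1 h2
    refine ⟨fun c => m * w (permPoint (sg c)), fun c => ?_, ?_, fun i => ?_⟩
    · have := h0 (permPoint (sg c)) (by simp)
      positivity
    · rw [← Finset.mul_sum]
      have : ∑ c, w (permPoint (sg c)) = 1 := h1
      rw [this, mul_one]
    · rw [← h2]
      simp [Finset.sum_apply, Finset.mul_sum, mul_assoc]
  · rintro ⟨l, h0, h1, h2⟩
    refine ⟨fun i => x i / m, ?_, ?_⟩
    · refine mem_convexHull_of_exists_fintype (fun c => l c / m) (fun c => permPoint (sg c))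
        (fun c => div_nonneg (h0 c) (by positivity)) ?_ (fun c => ⟨c, rfl⟩) ?_
      · rw [← Finset.sum_div, h1, div_self hm0]
      · ext i
        rw [h2]
        simp only [Finset.sum_apply, Pi.smul_apply, smul_eq_mul, Finset.sum_div]
        exact Finset.sum_congr rfl fun c _ => by ring
    · ext i
      simp only [Pi.smul_apply, smul_eq_mul]
      field_simp

/-- Weight modulo `k+1`. -/
def Wt {k : ℕ} (y : Fin (k + 1) → ℕ) : ZMod (k + 1) :=
  ∑ c, (y c : ZMod (k + 1)) * ((c : ℕ) : ZMod (k + 1))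

/-- Compositions of `M` with given weight. -/
def cls (k M : ℕ) (r : ZMod (k + 1)) : Finset (Fin (k + 1) → ℕ) :=
  {y ∈ Finset.piAntidiag Finset.univ M | Wt y = r}

theorem mem_cls {k M : ℕ} {r : ZMod (k + 1)} {y : Fin (k + 1) → ℕ} :
    y ∈ cls k M r ↔ ∑ c, y c = M ∧ Wt y = r := by
  simp [cls]

theorem card_total (k M : ℕ) : ∑ r, (cls k M r).card = (M + k).choose k := by
  unfold cls
  rw [← Finset.card_eq_sum_card_fiberwise (fun _ _ => by simp)]
  have h := Finset.card_finsuppAntidiag_nat_eq_choose (s := (Finset.univ : Finset (Fin (k + 1)))) M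
  have h2 : (Finset.finsuppAntidiag (Finset.univ : Finset (Fin (k + 1))) M).card =
      (Finset.piAntidiag (Finset.univ : Finset (Fin (k + 1))) M).card := by
    refine Finset.card_bij (fun f _ => ⇑f) ?_ ?_ ?_
    · intro f hf
      simpa using hf
    · intro f _ g _ h
      exact DFunLike.coe_injective h
    · intro f hf
      refine ⟨Finsupp.equivFunOnFinite.symm f, ?_, ?_⟩
      · simpa using hf
      · simp
  rw [← h2, h, Finset.card_univ, Fintype.card_fin]
  rw [show k + 1 + M - 1 = M + k by omega, Nat.choose_symm_add]

theorem cls_step (k M : ℕ) (r s : ZMod (k + 1)) :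
    (cls k M r).card ≤ (cls k (M + 1) s).card := by
  obtain ⟨c, hc⟩ : ∃ c : Fin (k + 1), ((c : ℕ) : ZMod (k + 1)) = s - r :=
    ⟨⟨(s - r).val, ZMod.val_lt _⟩, by simp⟩
  refine Finset.card_le_card_of_injOn (fun y => y + Pi.single c 1) ?_ ?_
  · intro y hy
    simp only [Finset.mem_coe] at hy ⊢
    rw [mem_cls] at hy ⊢
    refine ⟨?_, ?_⟩
    · simp [Finset.sum_add_distrib, hy.1]
    · have : Wt (y + Pi.single c 1) = Wt y + (s - r) := by
        unfold Wt
        simp only [Pi.add_apply, Nat.cast_add, add_mul, Finset.sum_add_distrib]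
        congr 1
        rw [← hc, Finset.sum_eq_single c]
        · simp
        · intro b _ hb
          simp [Pi.single_eq_of_ne hb]
        · simp
      rw [this, hy.2]; ring
  · intro y _ z _ h
    exact add_right_cancel h

theorem cls_upper (k M : ℕ) : (k + 1) * (cls k M 0).card ≤ (M + 1 + k).choose k := by
  rw [← card_total]
  calc (k + 1) * (cls k M 0).card = ∑ _r : ZMod (k + 1), (cls k M 0).card := by
        simp [ZMod.card]
    _ ≤ _ := Finset.sum_le_sum fun r _ => cls_step k M 0 r

theorem cls_lower (k M : ℕ) : (M + k).choose k ≤ (k + 1) * (cls k (M + 1) 0).card := by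
  rw [← card_total]
  calc _ ≤ ∑ _r : ZMod (k + 1), (cls k (M + 1) 0).card :=
        Finset.sum_le_sum fun r _ => cls_step k M r 0
    _ = _ := by simp [ZMod.card]

/-- Numerator of the inverse map. -/
def num {k : ℕ} (y : Fin (k + 1) → ℕ) (i : Fin (k + 1)) : ℤ :=
  ∑ c, (y c : ℤ) * ((((c - i : Fin (k + 1)) : ℕ) : ℤ) + 1)

theorem num_cast {k : ℕ} (y : Fin (k + 1) → ℕ) (i : Fin (k + 1)) :
    (num y i : ℝ) = ∑ c, (y c : ℝ) * permPoint (sg c) i := by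
  simp [num, point_sg]

theorem num_mod {k : ℕ} (y : Fin (k + 1) → ℕ) (i : Fin (k + 1)) :
    ((num y i : ℤ) : ZMod (k + 1)) = Wt y + (1 - (i : ℕ)) * ((∑ c, y c : ℕ) : ZMod (k + 1)) := by
  have hv : ∀ c : Fin (k + 1), (((c - i : Fin (k + 1)) : ℕ) : ZMod (k + 1)) = (c : ℕ) - (i : ℕ) := by
    intro c
    rw [sub_val]
    split_ifs with h
    · rw [Nat.cast_sub h]
    · rw [Nat.cast_sub (by omega), Nat.cast_add, ZMod.natCast_self]; ring
  unfold num Wt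
  push_cast
  rw [Finset.mul_sum, ← Finset.sum_add_distrib]
  refine Finset.sum_congr rfl fun c _ => ?_
  rw [hv]; ring

theorem num_dvd {k m : ℕ} {y : Fin (k + 1) → ℕ} (hy : y ∈ cls k ((k + 1) * m) 0)
    (i : Fin (k + 1)) : ((k + 1 : ℕ) : ℤ) * (num y i / ((k + 1 : ℕ) : ℤ)) = num y i := by
  rw [mem_cls] at hy
  apply Int.mul_ediv_cancel'
  rw [← ZMod.intCast_zmod_eq_zero_iff_dvd, num_mod, hy.1, hy.2, Nat.cast_mul, ZMod.natCast_self]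
  ring

theorem count_eq {k m : ℕ} (hm : 0 < m) :
    Set.ncard {x : Fin (k + 1) → ℤ | (fun i => (x i : ℝ)) ∈ (m : ℝ) • P123231312 (k + 1)} =
      (cls k ((k + 1) * m) 0).card := by
  have hk : ((k : ℝ) + 1) ≠ 0 := by positivity
  have himg : {x : Fin (k + 1) → ℤ | (fun i => (x i : ℝ)) ∈ (m : ℝ) • P123231312 (k + 1)} =
      (fun (y : Fin (k + 1) → ℕ) (i : Fin (k + 1)) => num y i / ((k + 1 : ℕ) : ℤ)) ''
        (cls k ((k + 1) * m) 0 : Set (Fin (k + 1) → ℕ)) := by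
    ext x
    rw [Set.mem_ofPred_eq, mem_dilate_s9 hm]
    constructor
    · rintro ⟨l, h0, h1, h2⟩
      have hy : ∀ i, ((m : ℤ) - x i + x (i + 1) : ℤ) = (k + 1 : ℝ) * l i := by
        intro i
        have := key_lin l i
        rw [← h2, ← h2, h1] at this
        push_cast
        linarith
      have hy0 : ∀ i, 0 ≤ (m : ℤ) - x i + x (i + 1) := by
        intro i
        have h : (0 : ℝ) ≤ ((m : ℤ) - x i + x (i + 1) : ℤ) := by
          rw [hy]
          exact mul_nonneg (by positivity) (h0 i)
        exact_mod_cast h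
      choose y hyy using fun i => Int.eq_ofNat_of_zero_le (hy0 i)
      have hyl : ∀ i, (y i : ℝ) = (k + 1 : ℝ) * l i := by
        intro i
        rw [← hy, hyy]; simp
      have hsum : ∑ c, y c = (k + 1) * m := by
        have : ((∑ c, y c : ℕ) : ℝ) = (k + 1) * m := by
          push_cast
          simp only [hyl]
          rw [← Finset.mul_sum, h1]
        exact_mod_cast this
      have hnum : ∀ i, num y i = ((k + 1 : ℕ) : ℤ) * x i := by
        intro i
        have : (num y i : ℝ) = (k + 1) * x i := by
          rw [num_cast, h2, Finset.mul_sum]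
          refine Finset.sum_congr rfl fun c _ => ?_
          rw [hyl]; ring
        exact_mod_cast this
      refine ⟨y, ?_, ?_⟩
      · rw [Finset.mem_coe, mem_cls]
        refine ⟨hsum, ?_⟩
        have := num_mod y 0
        rw [hnum, hsum, Int.cast_mul, Int.cast_natCast, Nat.cast_mul, ZMod.natCast_self] at this
        simpa using this.symm
      · ext i
        simp only [hnum]
        exact Int.mul_ediv_cancel_left _ (by positivity)
    · rintro ⟨y, hy, rfl⟩
      rw [Finset.mem_coe] at hy
      have hd := num_dvd hy
      rw [mem_cls] at hy
      refine ⟨fun c => y c / (k + 1), fun c => by positivity, ?_, fun i => ?_⟩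
      · rw [← Finset.sum_div]
        have : ((∑ c, y c : ℕ) : ℝ) = (k + 1) * m := by rw [hy.1]; push_cast; ring
        push_cast at this
        rw [this]
        field_simp
      · have h := hd i
        have h' : ((k + 1 : ℝ)) * ((num y i / ((k + 1 : ℕ) : ℤ) : ℤ) : ℝ) = num y i := by
          exact_mod_cast h
        apply mul_left_cancel₀ hk
        rw [h', num_cast, Finset.mul_sum]
        refine Finset.sum_congr rfl fun c _ => ?_
        field_simp
  rw [himg, Set.InjOn.ncard_image, Set.ncard_coe_finset]
  intro y hy z hz h
  rw [Finset.mem_coe] at hy hz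
  have hn : ∀ i, num y i = num z i := by
    intro i
    rw [← num_dvd hy i, ← num_dvd hz i]
    have := congrFun h i
    simp only at this
    rw [this]
  have := lin_inj (fun c => (y c : ℝ)) (fun c => (z c : ℝ))
    (by have := (mem_cls.1 hy).1.trans (mem_cls.1 hz).1.symm; exact_mod_cast this)
    (fun i => by rw [← num_cast, ← num_cast, hn])
  ext c
  have := congrFun this c
  exact_mod_cast this

theorem lim_choose (k : ℕ) (g : ℕ → ℕ) (a : ℝ)
    (hg : Filter.Tendsto g Filter.atTop Filter.atTop)
    (h : Filter.Tendsto (fun m => (g m : ℝ) / m) Filter.atTop (nhds a)) :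
    Filter.Tendsto (fun m => ((g m).choose k : ℝ) / (m : ℝ) ^ k) Filter.atTop
      (nhds (a ^ k / k.factorial)) := by
  have h1 := ((isEquivalent_choose k).comp_tendsto hg).div
    (Asymptotics.IsEquivalent.refl (u := fun m : ℕ => (m : ℝ) ^ k))
  refine (Asymptotics.IsEquivalent.tendsto_nhds_iff h1).2 ?_
  have := (h.pow k).div_const (k.factorial : ℝ)
  refine this.congr fun m => ?_
  simp only [Function.comp, Pi.div_apply]
  rw [div_pow, div_right_comm]

theorem lim_lin (k d : ℕ) : Filter.Tendsto (fun m : ℕ => (((k + 1) * m + d : ℕ) : ℝ) / m)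
    Filter.atTop (nhds (k + 1 : ℝ)) := by
  have h : Filter.Tendsto (fun m : ℕ => (k + 1 : ℝ) + (d : ℝ) / m) Filter.atTop
      (nhds (k + 1 + 0 : ℝ)) :=
    tendsto_const_nhds.add (tendsto_const_div_atTop_nhds_zero_nat _)
  rw [add_zero] at h
  refine h.congr' ?_
  filter_upwards [Filter.eventually_gt_atTop 0] with m hm
  have : (m : ℝ) ≠ 0 := by positivity
  push_cast
  field_simp

theorem lin_top (k d : ℕ) : Filter.Tendsto (fun m : ℕ => (k + 1) * m + d)
    Filter.atTop Filter.atTop :=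
  Filter.tendsto_atTop_mono (fun m => by
    have : m ≤ (k + 1) * m := Nat.le_mul_of_pos_left _ k.succ_pos
    simp only [id]
    omega) Filter.tendsto_id

theorem stmt9 (n : ℕ) (hn : 1 ≤ n) :
    (Av123231312 n).ncard = n ∧
    AffineIndependent ℝ (fun σ : ↥(Av123231312 n) => permPoint (σ : Equiv.Perm (Fin n))) ∧
    Filter.Tendsto
      (fun m : ℕ =>
        (Set.ncard {x : Fin n → ℤ | (fun i => (x i : ℝ)) ∈ (m : ℝ) • P123231312 n} : ℝ) /
          (m : ℝ) ^ (n - 1))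
      Filter.atTop
      (nhds ((n : ℝ) ^ (n - 2) / Nat.factorial (n - 1))) := by
  obtain ⟨k, rfl⟩ : ∃ k, n = k + 1 := ⟨n - 1, by omega⟩
  refine ⟨?_, ?_, ?_⟩
  · rw [Av_eq, ← Set.image_univ, Set.ncard_image_of_injective _ sg_inj, Set.ncard_univ]
    simp
  · have h := (aff_indep k).range
    have hmem : ∀ σ : ↥(Av123231312 (k + 1)),
        permPoint (σ : Equiv.Perm (Fin (k + 1))) ∈ Set.range fun c : Fin (k + 1) => permPoint (sg c) := by
      rintro ⟨σ, hσ⟩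
      rw [Av_eq] at hσ
      obtain ⟨c, rfl⟩ := hσ
      exact ⟨c, rfl⟩
    have hinj : Function.Injective fun σ : ↥(Av123231312 (k + 1)) =>
        (⟨_, hmem σ⟩ : Set.range fun c : Fin (k + 1) => permPoint (sg c)) := by
      intro σ τ hst
      have h1 := congrArg Subtype.val hst
      apply Subtype.ext
      ext i
      have := congrFun h1 i
      simpa [permPoint] using this
    exact h.comp_embedding ⟨_, hinj⟩
  · have hup := (lim_choose k _ _ (lin_top k (1 + k)) (lim_lin k (1 + k))).div_const (k + 1 : ℝ)
    have hlo : Filter.Tendsto (fun m : ℕ => ((((k + 1) * m - 1 + k).choose k : ℕ) : ℝ) / (m : ℝ) ^ k)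
        Filter.atTop (nhds ((k + 1 : ℝ) ^ k / k.factorial)) := by
      have e : Filter.Tendsto (fun m : ℕ => (((k + 1) * m - 1 + k : ℕ) : ℝ) / m) Filter.atTop
          (nhds (k + 1 : ℝ)) := by
        have h := (lim_lin k k).sub (tendsto_const_div_atTop_nhds_zero_nat (1 : ℝ))
        rw [sub_zero] at h
        refine h.congr' ?_
        filter_upwards [Filter.eventually_gt_atTop 0] with m hm
        have hp : 1 ≤ (k + 1) * m := Nat.mul_pos k.succ_pos hm
        rw [← sub_div]
        congr 1
        push_cast [Nat.cast_sub hp]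
        ring
      refine lim_choose k _ _ ?_ e
      refine Filter.tendsto_atTop_mono' _ ?_ (Filter.tendsto_sub_atTop_nat 1)
      filter_upwards with m
      have : m ≤ (k + 1) * m := Nat.le_mul_of_pos_left _ k.succ_pos
      omega
    have hlo' := hlo.div_const (k + 1 : ℝ)
    have hlim : ((k + 1 : ℕ) : ℝ) ^ (k + 1 - 2) / Nat.factorial (k + 1 - 1) =
        (k + 1 : ℝ) ^ k / k.factorial / (k + 1) := by
      have hk : ((k : ℝ) + 1) ≠ 0 := by positivity
      cases k with
      | zero => simp
      | succ k =>
        simp only [Nat.add_sub_cancel, show k + 1 + 1 - 2 = k by omega]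
        push_cast at hk ⊢
        rw [pow_succ]
        field_simp
    rw [hlim]
    refine tendsto_of_tendsto_of_tendsto_of_le_of_le' hlo' hup ?_ ?_
    · filter_upwards [Filter.eventually_gt_atTop 0] with m hm
      rw [count_eq hm, Nat.add_sub_cancel, div_right_comm]
      gcongr
      rw [div_le_iff₀ (by positivity)]
      have h := cls_lower k ((k + 1) * m - 1)
      rw [Nat.sub_add_cancel (Nat.mul_pos (Nat.succ_pos k) hm)] at h
      replace h := h.trans_eq (mul_comm _ _)
      exact_mod_cast h
    · filter_upwards [Filter.eventually_gt_atTop 0] with m hm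
      rw [count_eq hm, Nat.add_sub_cancel, div_right_comm]
      gcongr
      rw [le_div_iff₀ (by positivity), mul_comm]
      have h := cls_upper k ((k + 1) * m)
      rw [add_assoc] at h
      exact_mod_cast h
end
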